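/- arXiv:1303.1879 — 3 statements merged into one kernel-verified Lean document; each statement's English description precedes it below -/
import Mathlib

section
/- Suppose in addition that B is the convex hull of a finite set of points of ℤ² (the board polygon has integral vertices). Then for each positive integer q there exist a positive integer p and polynomials f_0, …, f_{p−1} with rational coefficients of degree 2q such that u_P(q;n) = f_{n mod p}(n) for all integers n ≥ 0, and the coefficient of n^{2q} and the coefficient of n^{2q−1} are each the same in every constituent f_k; in particular the coefficient of n^{2q} in every constituent equals (vol B)^q / q!, where vol B is the Lebesgue area of B. -/
open MeasureTheory Pointwise

namespace Riders

/-- periodic functions on the integers -/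
def Per (ψ : ℤ → ℚ) : Prop := ∃ N : ℕ, 0 < N ∧ ∀ x k : ℤ, ψ (x + N * k) = ψ x

lemma Per.mul {φ ψ : ℤ → ℚ} (h1 : Per φ) (h2 : Per ψ) : Per (fun x => φ x * ψ x) := by
  obtain ⟨N, hN, h⟩ := h1
  obtain ⟨N', hN', h'⟩ := h2
  refine ⟨N * N', Nat.mul_pos hN hN', fun x k => ?_⟩
  have e1 := h x (N' * k)
  have e2 := h' x (N * k)
  have a1 : x + ((N * N' : ℕ) : ℤ) * k = x + N * (N' * k) := by push_cast; ring
  have a2 : x + ((N * N' : ℕ) : ℤ) * k = x + N' * (N * k) := by push_cast; ring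
  simp only
  rw [a1, e1, ← a1, a2, e2]

lemma Per.const (c : ℚ) : Per (fun _ => c) := ⟨1, one_pos, fun _ _ => rfl⟩

lemma Per.ind (N : ℕ) (hN : 0 < N) (r : ℤ) :
    Per (fun x => if x % N = r then 1 else 0) :=
  ⟨N, hN, fun x k => by simp⟩

lemma Per.comp_mul {ψ : ℤ → ℚ} (h : Per ψ) (a b : ℤ) : Per (fun x => ψ (a * x + b)) := by
  obtain ⟨N, hN, h⟩ := h
  refine ⟨N, hN, fun x k => ?_⟩
  have := h (a * x + b) (a * k)
  simp only
  rw [← this]; congr 1; ring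

lemma Per.comp_div {ψ : ℤ → ℚ} (h : Per ψ) (a : ℕ) (ha : 0 < a) (ε : ℤ) :
    Per (fun x => ψ ((x - ε) / a)) := by
  obtain ⟨N, hN, h⟩ := h
  refine ⟨a * N, Nat.mul_pos ha hN, fun x k => ?_⟩
  simp only
  rw [← h ((x - ε) / a) k]; congr 1
  have : x + ((a * N : ℕ) : ℤ) * k - ε = (x - ε) + a * (N * k) := by push_cast; ring
  rw [this, Int.add_mul_ediv_left _ _ (by positivity)]

lemma Per.expand {ψ : ℤ → ℚ} {N : ℕ} (hN : 0 < N) (h : ∀ x k : ℤ, ψ (x + N * k) = ψ x) (x : ℤ) :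
    ψ x = ∑ r ∈ Finset.range N, ψ r * (if x % N = r then 1 else 0) := by
  have h1 : ψ x = ψ (x % N) := by
    rw [← h (x % N) (x / N), Int.emod_add_mul_ediv]
  have h0 : 0 ≤ x % N := Int.emod_nonneg _ (by positivity)
  have h2 : x % N < N := Int.emod_lt_of_pos _ (by positivity)
  obtain ⟨r, hr⟩ := Int.eq_ofNat_of_zero_le h0
  rw [h1, hr, Finset.sum_eq_single r]
  · simp
  · intro b _ hb
    have : ¬ ((r : ℤ) = b) := by omega
    simp [this]
  · intro hr'
    simp at hr'
    omega

/-- generators of the algebra of piecewise quasi-polynomial functions -/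
def Gen (Λ : Type*) [AddCommGroup Λ] : Set (Λ → ℚ) :=
  {F | (∃ l : Λ →+ ℤ, F = fun y => (l y : ℚ)) ∨
    (∃ l : Λ →+ ℤ, F = fun y => if 0 < l y then 1 else 0) ∨
    (∃ l : Λ →+ ℤ, ∃ ψ : ℤ → ℚ, Per ψ ∧ F = fun y => ψ (l y))}

/-- homogeneous piecewise quasi-polynomial functions -/
def PA (Λ : Type*) [AddCommGroup Λ] : Subalgebra ℚ (Λ → ℚ) := Algebra.adjoin ℚ (Gen Λ)

section
variable {Λ Λ' : Type*} [AddCommGroup Λ] [AddCommGroup Λ']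

lemma PA.lin (l : Λ →+ ℤ) : (fun y => (l y : ℚ)) ∈ PA Λ :=
  Algebra.subset_adjoin (Or.inl ⟨l, rfl⟩)

lemma PA.pos (l : Λ →+ ℤ) : (fun y => if 0 < l y then (1 : ℚ) else 0) ∈ PA Λ :=
  Algebra.subset_adjoin (Or.inr (Or.inl ⟨l, rfl⟩))

lemma PA.per (l : Λ →+ ℤ) {ψ : ℤ → ℚ} (h : Per ψ) : (fun y => ψ (l y)) ∈ PA Λ :=
  Algebra.subset_adjoin (Or.inr (Or.inr ⟨l, ψ, h, rfl⟩))

lemma PA.const (c : ℚ) : (fun _ => c) ∈ PA Λ := (PA Λ).algebraMap_mem c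

lemma PA.mul {F G : Λ → ℚ} (hF : F ∈ PA Λ) (hG : G ∈ PA Λ) : (fun y => F y * G y) ∈ PA Λ :=
  (PA Λ).mul_mem hF hG

lemma PA.add {F G : Λ → ℚ} (hF : F ∈ PA Λ) (hG : G ∈ PA Λ) : (fun y => F y + G y) ∈ PA Λ :=
  (PA Λ).add_mem hF hG

lemma PA.sub {F G : Λ → ℚ} (hF : F ∈ PA Λ) (hG : G ∈ PA Λ) : (fun y => F y - G y) ∈ PA Λ :=
  (PA Λ).sub_mem hF hG

lemma PA.pow {F : Λ → ℚ} (hF : F ∈ PA Λ) (j : ℕ) : (fun y => F y ^ j) ∈ PA Λ :=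
  (PA Λ).pow_mem hF j

lemma PA.prod {ι : Type*} (s : Finset ι) {F : ι → Λ → ℚ} (hF : ∀ i ∈ s, F i ∈ PA Λ) :
    (fun y => ∏ i ∈ s, F i y) ∈ PA Λ := by
  have := (PA Λ).prod_mem hF
  convert this using 1
  ext y; simp

lemma PA.sum {ι : Type*} (s : Finset ι) {F : ι → Λ → ℚ} (hF : ∀ i ∈ s, F i ∈ PA Λ) :
    (fun y => ∑ i ∈ s, F i y) ∈ PA Λ := by
  have := (PA Λ).sum_mem hF
  convert this using 1
  ext y; simp

lemma PA.nonpos (l : Λ →+ ℤ) : (fun y => if l y ≤ 0 then (1 : ℚ) else 0) ∈ PA Λ := by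
  convert PA.sub (PA.const 1) (PA.pos l) using 1
  ext y
  by_cases h : 0 < l y
  · simp [h, not_le.mpr h]
  · simp [h, not_lt.mp h]

lemma PA.ne (l : Λ →+ ℤ) : (fun y => if l y ≠ 0 then (1 : ℚ) else 0) ∈ PA Λ := by
  convert PA.add (PA.pos l) (PA.pos (-l)) using 1
  ext y
  rcases lt_trichotomy (l y) 0 with h | h | h
  · simp [h, h.ne, not_lt.mpr h.le]
  · simp [h]
  · simp [h, h.ne', not_lt.mpr h.le]

lemma PA.comp (φ : Λ →+ Λ') {F : Λ' → ℚ} (hF : F ∈ PA Λ') : (fun y => F (φ y)) ∈ PA Λ := by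
  induction hF using Algebra.adjoin_induction with
  | mem F hF =>
    rcases hF with ⟨l, rfl⟩ | ⟨l, rfl⟩ | ⟨l, ψ, h, rfl⟩
    · exact PA.lin (l.comp φ)
    · exact PA.pos (l.comp φ)
    · exact PA.per (l.comp φ) h
  | algebraMap r => exact PA.const r
  | add F G _ _ h1 h2 => exact PA.add h1 h2
  | mul F G _ _ h1 h2 => exact PA.mul h1 h2

/-- quasi-polynomials -/
def QP : Subalgebra ℚ (ℤ → ℚ) :=
  Algebra.adjoin ℚ {F | F = (fun x : ℤ => (x : ℚ)) ∨ Per F}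

lemma floor_eq (x ε : ℤ) (a : ℕ) (ha : 0 < a) :
    (((x - ε) / a : ℤ) : ℚ) = ((x : ℚ) - ε - (((x - ε) % a : ℤ) : ℚ)) * (1 / (a : ℚ)) := by
  have h := Int.emod_add_mul_ediv (x - ε) a
  have h' : ((((x - ε) % a : ℤ) : ℚ)) + a * (((x - ε) / a : ℤ) : ℚ) = x - ε := by exact_mod_cast h
  have : (a : ℚ) ≠ 0 := by positivity
  field_simp
  linarith

lemma Per.emod (ε : ℤ) (a : ℕ) (ha : 0 < a) : Per (fun x => (((x - ε) % a : ℤ) : ℚ)) := by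
  refine ⟨a, ha, fun x k => ?_⟩
  simp only
  have : x + a * k - ε = (x - ε) + a * k := by ring
  rw [this, Int.add_mul_emod_self_left]

lemma QP.floor {g : ℤ → ℚ} (hg : g ∈ QP) (l : Λ →+ ℤ) (a : ℕ) (ha : 0 < a) (ε : ℤ) :
    (fun y => g ((l y - ε) / a)) ∈ PA Λ := by
  induction hg using Algebra.adjoin_induction with
  | mem F hF =>
    rcases hF with rfl | h
    · have := PA.mul (PA.sub (PA.sub (PA.lin l) (PA.const (ε : ℚ))) (PA.per l (Per.emod ε a ha)))
        (PA.const (1 / (a : ℚ)))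
      convert this using 1
      ext y
      exact floor_eq _ _ _ ha
    · exact PA.per l (h.comp_div a ha ε)
  | algebraMap r => exact PA.const r
  | add F G _ _ h1 h2 => exact PA.add h1 h2
  | mul F G _ _ h1 h2 => exact PA.mul h1 h2

lemma QP.floor_self (a : ℕ) (ha : 0 < a) (ε : ℤ) :
    (fun x : ℤ => (((x - ε) / a : ℤ) : ℚ)) ∈ QP := by
  have h1 : (fun x : ℤ => (x : ℚ)) ∈ QP := Algebra.subset_adjoin (Or.inl rfl)
  have h2 : (fun x : ℤ => (((x - ε) % a : ℤ) : ℚ)) ∈ QP :=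
    Algebra.subset_adjoin (Or.inr (Per.emod ε a ha))
  have h3 := QP.mul_mem (QP.sub_mem (QP.sub_mem h1 (QP.algebraMap_mem (ε : ℚ))) h2)
    (QP.algebraMap_mem (1 / (a : ℚ)))
  convert h3 using 1
  ext x
  exact floor_eq _ _ _ ha

/-- polynomial antidifferences -/
lemma poly_antidiff (p : Polynomial ℚ) :
    ∃ P : Polynomial ℚ, ∀ x : ℚ, P.eval x - P.eval (x - 1) = p.eval x := by
  induction p using Polynomial.induction_on' with
  | add p q hp hq =>
    obtain ⟨P, hP⟩ := hp
    obtain ⟨Q, hQ⟩ := hq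
    refine ⟨P + Q, fun x => ?_⟩
    simp only [Polynomial.eval_add]
    linarith [hP x, hQ x]
  | monomial n c =>
    refine ⟨Polynomial.C (c / (n + 1)) * (Polynomial.bernoulli (n + 1)).comp (Polynomial.X + 1),
      fun x => ?_⟩
    have h := Polynomial.bernoulli_eval_one_add (n + 1) x
    have : ((n : ℚ) + 1) ≠ 0 := by positivity
    simp only [Polynomial.eval_mul, Polynomial.eval_C, Polynomial.eval_comp, Polynomial.eval_add,
      Polynomial.eval_X, Polynomial.eval_one, Polynomial.eval_monomial, sub_add_cancel]
    rw [add_comm x 1, h]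
    push_cast
    field_simp
    simp
    ring

lemma QP.poly_mem {f : ℤ → ℚ} (hf : f ∈ QP) (P : Polynomial ℚ) : (fun n => P.eval (f n)) ∈ QP := by
  induction P using Polynomial.induction_on' with
  | add p q hp hq =>
    convert QP.add_mem hp hq using 1
    ext x; simp
  | monomial n c =>
    convert QP.smul_mem (QP.pow_mem hf n) c using 1
    ext x; simp

lemma QP.antidiff_ind (N : ℕ) (hN : 0 < N) (r : ℕ) (hr : r < N) (j : ℕ) :
    ∃ g ∈ QP, ∀ n : ℤ, g n - g (n - 1) = (if n % N = r then 1 else 0) * (n : ℚ) ^ j := by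
  obtain ⟨P, hP⟩ := poly_antidiff
    ((Polynomial.C (r : ℚ) + Polynomial.C (N : ℚ) * Polynomial.X) ^ j)
  refine ⟨fun n => P.eval ((((n - r) / N : ℤ)) : ℚ), ?_, fun n => ?_⟩
  · have h := QP.floor_self N hN r
    exact QP.poly_mem h P
  · have hN' : (0 : ℤ) < N := by exact_mod_cast hN
    by_cases h : n % N = r
    · have hd : (N : ℤ) ∣ n - r := by
        rw [← h]; exact Int.dvd_self_sub_emod
      obtain ⟨k, hk⟩ := hd
      have e1 : (n - r) / N = k := by rw [hk]; exact Int.mul_ediv_cancel_left _ hN'.ne'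
      have e2 : (n - 1 - r) / N = k - 1 := by
        have : n - 1 - r = (N - 1) + N * (k - 1) := by linarith
        rw [this, Int.add_mul_ediv_left _ _ hN'.ne', Int.ediv_eq_zero_of_lt] <;> omega
      have := hP k
      simp only [e1, e2, h]
      push_cast
      rw [this]
      have : (n : ℚ) = r + N * k := by
        have : n = r + N * k := by linarith
        exact_mod_cast this
      simp [this]
    · have e : (n - r) / N = (n - 1 - r) / N := by
        have hm0 := Int.emod_nonneg (n - r) hN'.ne'
        have hm1 := Int.emod_lt_of_pos (n - r) hN'
        have hm := Int.emod_add_mul_ediv (n - r) N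
        have hne : (n - r) % N ≠ 0 := by
          intro h0
          apply h
          have h3 : n % N = r % N := Int.emod_eq_emod_iff_emod_sub_eq_zero.mpr h0
          rw [h3]; exact Int.emod_eq_of_lt (by positivity) (by exact_mod_cast hr)
        have : n - 1 - r = ((n - r) % N - 1) + N * ((n - r) / N) := by linarith
        rw [this, Int.add_mul_ediv_left _ _ hN'.ne', Int.ediv_eq_zero_of_lt (a := (n - r) % N - 1)]
        · ring
        · omega
        · omega
      simp [e, h]

lemma QP.antidiff {ψ : ℤ → ℚ} (h : Per ψ) (j : ℕ) :
    ∃ g ∈ QP, ∀ n : ℤ, g n - g (n - 1) = ψ n * (n : ℚ) ^ j := by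
  obtain ⟨N, hN, h⟩ := h
  have H : ∀ r : ℕ, ∃ g ∈ QP, r < N → ∀ n : ℤ, g n - g (n - 1) =
      (if n % N = r then 1 else 0) * (n : ℚ) ^ j := by
    intro r
    by_cases hr : r < N
    · obtain ⟨g, h1, h2⟩ := QP.antidiff_ind N hN r hr j
      exact ⟨g, h1, fun _ => h2⟩
    · exact ⟨0, QP.zero_mem, fun h => absurd h hr⟩
  choose g hg1 hg2 using H
  refine ⟨∑ r ∈ Finset.range N, (ψ r) • g r, QP.sum_mem fun r _ => QP.smul_mem (hg1 r) _, ?_⟩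
  intro n
  rw [Per.expand hN h n, Finset.sum_mul]
  simp only [Finset.sum_apply, Pi.smul_apply, smul_eq_mul]
  rw [← Finset.sum_sub_distrib]
  refine Finset.sum_congr rfl fun r hr => ?_
  rw [← mul_sub, hg2 r (Finset.mem_range.mp hr), mul_assoc]

lemma sum_antidiff {f g : ℤ → ℚ} (h : ∀ n, g n - g (n - 1) = f n) (n : ℕ) :
    ∑ x ∈ Finset.Ioc (0 : ℤ) n, f x = g n - g 0 := by
  induction n with
  | zero => simp
  | succ n ih =>
    have : Finset.Ioc (0 : ℤ) ((n + 1 : ℕ) : ℤ) = insert ((n + 1 : ℕ) : ℤ) (Finset.Ioc (0 : ℤ) n) := by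
      ext x; simp; omega
    rw [this, Finset.sum_insert (by simp), ih, ← h]
    push_cast
    simp

/-- basic terms -/
def Term (Λ : Type*) [AddCommGroup Λ] : Set (Λ × ℤ → ℚ) :=
  {w | ∃ h ∈ PA Λ, ∃ ψ : ℤ → ℚ, Per ψ ∧ ∃ j a : ℕ, 0 < a ∧ ∃ l : Λ →+ ℤ, ∃ ε : ℤ, (ε = 0 ∨ ε = 1) ∧
    w = fun p => h p.1 * ψ p.2 * (p.2 : ℚ) ^ j * (if a * p.2 + ε ≤ l p.1 then 1 else 0)}

/-- span of the basic terms -/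
def TS (Λ : Type*) [AddCommGroup Λ] : Submodule ℚ (Λ × ℤ → ℚ) := Submodule.span ℚ (Term Λ)

lemma TS.mk {h : Λ → ℚ} (hh : h ∈ PA Λ) {ψ : ℤ → ℚ} (hψ : Per ψ) (j : ℕ) {a : ℕ} (ha : 0 < a)
    (l : Λ →+ ℤ) {ε : ℤ} (hε : ε = 0 ∨ ε = 1) :
    (fun p : Λ × ℤ => h p.1 * ψ p.2 * (p.2 : ℚ) ^ j * (if a * p.2 + ε ≤ l p.1 then 1 else 0)) ∈ TS Λ :=
  Submodule.subset_span ⟨h, hh, ψ, hψ, j, a, ha, l, ε, hε, rfl⟩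

lemma ite_cut {P Q G : Prop} [Decidable P] [Decidable Q] [Decidable G] (h1 : G → P → Q)
    (h2 : ¬ G → Q → P) : (if P then (1 : ℚ) else 0) * (if Q then (1 : ℚ) else 0) =
      (if G then (1 : ℚ) else 0) * (if P then (1 : ℚ) else 0) +
      (1 - (if G then (1 : ℚ) else 0)) * (if Q then (1 : ℚ) else 0) := by
  by_cases hG : G <;> by_cases hP : P <;> by_cases hQ : Q <;> simp_all

lemma cut_mul {a b : ℕ} (ha : 0 < a) (hb : 0 < b) (l m : Λ →+ ℤ) {ε δ : ℤ}
    (hε : ε = 0 ∨ ε = 1) (hδ : δ = 0 ∨ δ = 1) :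
    ∃ g ∈ PA Λ, ∀ (y : Λ) (x : ℤ), (if a * x + ε ≤ l y then (1 : ℚ) else 0) *
      (if b * x + δ ≤ m y then (1 : ℚ) else 0) =
      g y * (if a * x + ε ≤ l y then (1 : ℚ) else 0) +
      (1 - g y) * (if b * x + δ ≤ m y then (1 : ℚ) else 0) := by
  have ha' : (0 : ℤ) < a := by exact_mod_cast ha
  have hb' : (0 : ℤ) < b := by exact_mod_cast hb
  by_cases hc : ε = 0 ∧ δ = 1
  · obtain ⟨rfl, rfl⟩ := hc
    refine ⟨_, PA.pos ((a : ℤ) • m - (b : ℤ) • l), fun y x => ?_⟩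
    simp only [AddMonoidHom.sub_apply, AddMonoidHom.smul_apply, smul_eq_mul]
    refine ite_cut (fun h h1 => ?_) (fun h h1 => ?_) <;> by_contra h2 <;> nlinarith
  · refine ⟨_, PA.nonpos ((b : ℤ) • l - (a : ℤ) • m), fun y x => ?_⟩
    simp only [AddMonoidHom.sub_apply, AddMonoidHom.smul_apply, smul_eq_mul]
    have hεδ : δ ≤ ε := by omega
    refine ite_cut (fun h h1 => ?_) (fun h h1 => ?_) <;> by_contra h2 <;>
      rcases hε with rfl | rfl <;> rcases hδ with rfl | rfl <;> first | omega | nlinarith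

/-- splitting a linear form on `Λ × ℤ` -/
lemma split_lin (L : Λ × ℤ →+ ℤ) : ∃ (l : Λ →+ ℤ) (α : ℤ), ∀ p, L p = l p.1 + α * p.2 := by
  refine ⟨L.comp (AddMonoidHom.inl Λ ℤ), L (0, 1), fun p => ?_⟩
  have : p = (p.1, 0) + p.2 • ((0, 1) : Λ × ℤ) := by ext <;> simp
  conv_lhs => rw [this, map_add, map_zsmul]
  simp [mul_comm]

lemma TS.mul_cut {w : Λ × ℤ → ℚ} (hw : w ∈ Term Λ) {b : ℕ} (hb : 0 < b) (m : Λ →+ ℤ) {δ : ℤ}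
    (hδ : δ = 0 ∨ δ = 1) :
    (fun p : Λ × ℤ => (if b * p.2 + δ ≤ m p.1 then (1 : ℚ) else 0) * w p) ∈ TS Λ := by
  obtain ⟨h, hh, ψ, hψ, j, a, ha, l, ε, hε, rfl⟩ := hw
  obtain ⟨g, hg, hcut⟩ := cut_mul ha hb l m hε hδ
  convert (TS Λ).add_mem (TS.mk (PA.mul hh hg) hψ j ha l hε)
    (TS.mk (PA.mul hh (PA.sub (PA.const 1) hg)) hψ j hb m hδ) using 1
  ext p
  have := hcut p.1 p.2
  simp only [Pi.add_apply]
  linear_combination (h p.1 * ψ p.2 * (p.2 : ℚ) ^ j) * this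

lemma TS.mul_gen {w : Λ × ℤ → ℚ} (hw : w ∈ Term Λ) {F : Λ × ℤ → ℚ} (hF : F ∈ Gen (Λ × ℤ)) :
    F * w ∈ TS Λ := by
  have hw' := hw
  obtain ⟨h, hh, ψ, hψ, j, a, ha, l, ε, hε, rfl⟩ := hw'
  rcases hF with ⟨L, rfl⟩ | ⟨L, rfl⟩ | ⟨L, θ, hθ, rfl⟩
  · obtain ⟨m, α, hL⟩ := split_lin L
    convert (TS Λ).add_mem (TS.mk (PA.mul hh (PA.lin m)) hψ j ha l hε)
      (TS.mk (PA.mul hh (PA.const (α : ℚ))) hψ (j + 1) ha l hε) using 1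
    ext p
    simp only [Pi.add_apply, Pi.mul_apply, hL]
    push_cast
    ring
  · obtain ⟨m, α, hL⟩ := split_lin L
    rcases lt_trichotomy α 0 with hα | hα | hα
    · have hb : 0 < α.natAbs := Int.natAbs_pos.mpr hα.ne
      convert TS.mul_cut hw hb m (Or.inr rfl) using 1
      ext p
      simp only [Pi.mul_apply, hL]
      congr 2
      have : (α.natAbs : ℤ) = -α := by omega
      rw [this]
      apply propext; constructor <;> intro h <;> linarith
    · convert TS.mk (PA.mul (PA.pos m) hh) hψ j ha l hε using 1
      ext p
      simp only [Pi.mul_apply, hL, hα, zero_mul, add_zero]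
      ring
    · have hb : 0 < α.natAbs := Int.natAbs_pos.mpr hα.ne'
      convert (TS Λ).sub_mem (Submodule.subset_span hw) (TS.mul_cut hw hb (-m) (Or.inl rfl)) using 1
      ext p
      simp only [Pi.mul_apply, Pi.sub_apply, hL]
      have : (α.natAbs : ℤ) = α := by omega
      rw [this]
      by_cases h0 : 0 < m p.1 + α * p.2
      · have h1 : ¬ (α * p.2 + 0 ≤ (- m) p.1) := by
          rw [AddMonoidHom.neg_apply]; linarith
        rw [if_pos h0, if_neg h1]; ring
      · have h1 : (α * p.2 + 0 ≤ (- m) p.1) := by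
          rw [AddMonoidHom.neg_apply]; linarith
        rw [if_neg h0, if_pos h1]; ring
  · obtain ⟨m, α, hL⟩ := split_lin L
    obtain ⟨N, hN, hper⟩ := hθ
    have key : ∀ r ∈ Finset.range N, (fun p : Λ × ℤ => (h p.1 * θ (1 * m p.1 + α * r)) *
        (ψ p.2 * (if p.2 % N = (r : ℤ) then 1 else 0)) * (p.2 : ℚ) ^ j *
          (if a * p.2 + ε ≤ l p.1 then 1 else 0)) ∈ TS Λ := by
      intro r _
      exact TS.mk (PA.mul hh (PA.per m (Per.comp_mul ⟨N, hN, hper⟩ 1 (α * r))))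
        (hψ.mul (Per.ind N hN r)) j ha l hε
    convert (TS Λ).sum_mem key using 1
    ext p
    simp only [Pi.mul_apply, Finset.sum_apply, hL]
    have h2 : θ (m p.1 + α * p.2) = ∑ r ∈ Finset.range N,
        θ (1 * m p.1 + α * r) * (if p.2 % N = (r : ℤ) then 1 else 0) := by
      have := Per.expand (ψ := fun x => θ (1 * m p.1 + α * x)) hN (fun x k => by
        have := hper (1 * m p.1 + α * x) (α * k)
        rw [← this]; congr 1; ring) p.2
      simpa using this
    rw [h2, Finset.sum_mul]
    refine Finset.sum_congr rfl fun r _ => ?_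
    ring

lemma TS.mul_mem {F : Λ × ℤ → ℚ} (hF : F ∈ PA (Λ × ℤ)) : ∀ w ∈ TS Λ, F * w ∈ TS Λ := by
  induction hF using Algebra.adjoin_induction with
  | mem F hF =>
    intro w hw
    induction hw using Submodule.span_induction with
    | mem w hw => exact TS.mul_gen hw hF
    | zero => simp
    | add v w _ _ h1 h2 => rw [mul_add]; exact (TS Λ).add_mem h1 h2
    | smul c w _ h => rw [mul_smul_comm]; exact (TS Λ).smul_mem _ h
  | algebraMap r =>
    intro w hw
    rw [← Algebra.smul_def]
    exact (TS Λ).smul_mem _ hw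
  | add F G _ _ h1 h2 =>
    intro w hw
    rw [add_mul]; exact (TS Λ).add_mem (h1 w hw) (h2 w hw)
  | mul F G _ _ h1 h2 =>
    intro w hw
    rw [mul_assoc]; exact h1 _ (h2 w hw)

lemma TS.sum {w : Λ × ℤ → ℚ} (hw : w ∈ TS Λ) :
    ∃ G ∈ PA Λ, ∀ y, ∃ K₀ : ℤ, ∀ K ≥ K₀, ∑ x ∈ Finset.Ioc 0 K, w (y, x) = G y := by
  induction hw using Submodule.span_induction with
  | mem w hw =>
    obtain ⟨h, hh, ψ, hψ, j, a, ha, l, ε, hε, rfl⟩ := hw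
    obtain ⟨g, hg, hd⟩ := QP.antidiff hψ j
    have ha' : (0 : ℤ) < a := by exact_mod_cast ha
    refine ⟨_, PA.mul (PA.mul hh (PA.pos l)) (PA.sub (QP.floor hg l a ha ε) (PA.const (g 0))), ?_⟩
    intro y
    refine ⟨max 0 ((l y - ε) / a), fun K hK => ?_⟩
    have hcut : ∀ x : ℤ, (a * x + ε ≤ l y) ↔ x ≤ (l y - ε) / a := by
      intro x
      rw [Int.le_ediv_iff_mul_le ha']
      constructor <;> intro h <;> linarith
    simp only [hcut]
    by_cases hl : 0 < l y
    · have h0 : 0 ≤ (l y - ε) / a := Int.ediv_nonneg (by omega) ha'.le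
      obtain ⟨n, hn⟩ := Int.eq_ofNat_of_zero_le h0
      rw [hn] at hK ⊢
      rw [if_pos hl, ← sum_antidiff hd n, mul_one, Finset.mul_sum]
      have hsub : Finset.Ioc (0 : ℤ) n ⊆ Finset.Ioc 0 K := by
        apply Finset.Ioc_subset_Ioc_right
        exact le_trans (le_max_right _ _) hK
      rw [← Finset.sum_subset hsub]
      · refine Finset.sum_congr rfl fun x hx => ?_
        rw [Finset.mem_Ioc] at hx
        rw [if_pos hx.2]; ring
      · intro x hx hx'
        rw [Finset.mem_Ioc] at hx hx'
        rw [if_neg (by tauto)]; ring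
    · rw [if_neg hl]
      rw [Finset.sum_eq_zero]
      · ring
      · intro x hx
        rw [Finset.mem_Ioc] at hx
        rw [if_neg]
        · ring
        · rw [← hcut]
          have := mul_pos ha' hx.1
          rcases hε with rfl | rfl <;> intro hc <;> linarith
  | zero => exact ⟨0, (PA Λ).zero_mem, fun y => ⟨0, fun K _ => by simp⟩⟩
  | add v w _ _ h1 h2 =>
    obtain ⟨G, hG, h1⟩ := h1
    obtain ⟨G', hG', h2⟩ := h2
    refine ⟨_, PA.add hG hG', fun y => ?_⟩
    obtain ⟨K1, h1⟩ := h1 y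
    obtain ⟨K2, h2⟩ := h2 y
    refine ⟨max K1 K2, fun K hK => ?_⟩
    rw [← h1 K (le_trans (le_max_left _ _) hK), ← h2 K (le_trans (le_max_right _ _) hK),
      ← Finset.sum_add_distrib]
    rfl
  | smul c w _ h =>
    obtain ⟨G, hG, h⟩ := h
    refine ⟨_, PA.mul (PA.const c) hG, fun y => ?_⟩
    obtain ⟨K1, h⟩ := h y
    refine ⟨K1, fun K hK => ?_⟩
    rw [← h K hK, Finset.mul_sum]
    rfl

/-- The key summation lemma. -/
lemma PA.sum_Ioc_zero {F : Λ × ℤ → ℚ} (hF : F ∈ PA (Λ × ℤ)) (τ : Λ →+ ℤ) :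
    (fun y => ∑ x ∈ Finset.Ioc 0 (τ y), F (y, x)) ∈ PA Λ := by
  have h1 := TS.mul_mem hF _ (TS.mk (PA.const 1) (Per.const 1) 0 one_pos τ (Or.inl rfl))
  obtain ⟨G, hG, h⟩ := TS.sum h1
  convert hG using 1
  ext y
  obtain ⟨K0, h⟩ := h y
  rw [← h (max K0 (τ y)) (le_max_left _ _)]
  rw [← Finset.sum_subset (Finset.Ioc_subset_Ioc_right (le_max_right K0 (τ y)))]
  · refine Finset.sum_congr rfl fun x hx => ?_
    rw [Finset.mem_Ioc] at hx
    simp [hx.2]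
  · intro x hx hx'
    rw [Finset.mem_Ioc] at hx hx'
    have : ¬ x ≤ τ y := by tauto
    simp [this]

lemma PA.sum_Ioc {F : Λ × ℤ → ℚ} (hF : F ∈ PA (Λ × ℤ)) (σ τ : Λ →+ ℤ) :
    (fun y => ∑ x ∈ Finset.Ioc (σ y) (τ y), F (y, x)) ∈ PA Λ := by
  let φ : Λ × ℤ →+ Λ × ℤ :=
    (AddMonoidHom.fst Λ ℤ).prod (AddMonoidHom.snd Λ ℤ + σ.comp (AddMonoidHom.fst Λ ℤ))
  convert PA.sum_Ioc_zero (PA.comp φ hF) (τ - σ) using 1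
  ext y
  refine Finset.sum_nbij' (fun x => x - σ y) (fun x => x + σ y) ?_ ?_ ?_ ?_ ?_
  · intro x hx; simp only [Finset.mem_Ioc, AddMonoidHom.sub_apply] at hx ⊢; constructor <;> linarith [hx.1, hx.2]
  · intro x hx; simp only [Finset.mem_Ioc, AddMonoidHom.sub_apply] at hx ⊢; constructor <;> linarith [hx.1, hx.2]
  · intro x _; ring
  · intro x _; ring
  · intro x _; simp [φ]

end

lemma PA_int_qp {F : ℤ → ℚ} (hF : F ∈ PA ℤ) :
    ∃ p : ℕ, 0 < p ∧ ∃ f : ℕ → Polynomial ℚ, ∀ n : ℕ, F (n + 1) = (f (n % p)).eval (n : ℚ) := by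
  induction hF using Algebra.adjoin_induction with
  | mem F hF =>
    have hl : ∀ (l : ℤ →+ ℤ) (x : ℤ), l x = x * l 1 := by
      intro l x
      have := map_zsmul l x 1
      simpa using this
    rcases hF with ⟨l, rfl⟩ | ⟨l, rfl⟩ | ⟨l, ψ, ⟨N, hN, h⟩, rfl⟩
    · refine ⟨1, one_pos, fun _ => (Polynomial.X + 1) * Polynomial.C (l 1 : ℚ), fun n => ?_⟩
      simp only [hl l ((n : ℤ) + 1)]; simp
    · refine ⟨1, one_pos, fun _ => Polynomial.C (if 0 < l 1 then 1 else 0), fun n => ?_⟩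
      simp only [Polynomial.eval_C]
      rw [hl]
      have : (0 < ((n : ℤ) + 1) * l 1) ↔ 0 < l 1 := by
        constructor
        · intro h; exact pos_of_mul_pos_right h (by positivity)
        · intro h; positivity
      simp only [this]
    · refine ⟨N, hN, fun k => Polynomial.C (ψ (l (k + 1))), fun n => ?_⟩
      simp only [Polynomial.eval_C]
      rw [hl, hl l (((n % N : ℕ) : ℤ) + 1), ← h ((((n % N : ℕ) : ℤ) + 1) * l 1) ((n / N : ℕ) * l 1)]
      congr 1
      have : (n : ℤ) = ((n % N : ℕ) : ℤ) + N * ((n / N : ℕ) : ℤ) := by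
        exact_mod_cast (Nat.mod_add_div n N).symm
      linear_combination (l 1) * this
  | algebraMap r => exact ⟨1, one_pos, fun _ => Polynomial.C r, fun n => by simp⟩
  | add F G _ _ h1 h2 =>
    obtain ⟨p, hp, f, hf⟩ := h1
    obtain ⟨p', hp', f', hf'⟩ := h2
    refine ⟨p * p', Nat.mul_pos hp hp', fun k => f (k % p) + f' (k % p'), fun n => ?_⟩
    simp [hf, hf', Nat.mod_mul_right_mod, Nat.mod_mul_left_mod]
  | mul F G _ _ h1 h2 =>
    obtain ⟨p, hp, f, hf⟩ := h1
    obtain ⟨p', hp', f', hf'⟩ := h2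
    refine ⟨p * p', Nat.mul_pos hp hp', fun k => f (k % p) * f' (k % p'), fun n => ?_⟩
    simp [hf, hf', Nat.mod_mul_right_mod, Nat.mod_mul_left_mod]

/-- the box of half-width `K * t` -/
noncomputable def box (K : ℕ) (t : ℤ) : Finset (ℤ × ℤ) :=
  Finset.Ioc (-(K * t)) (K * t) ×ˢ Finset.Ioc (-(K * t)) (K * t)

lemma PA.sum_box {Λ : Type*} [AddCommGroup Λ] (τ : Λ →+ ℤ) (K : ℕ) {F : Λ × (ℤ × ℤ) → ℚ}
    (hF : F ∈ PA (Λ × (ℤ × ℤ))) : (fun y => ∑ z ∈ box K (τ y), F (y, z)) ∈ PA Λ := by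
  let φ : (Λ × ℤ) × ℤ →+ Λ × (ℤ × ℤ) := (AddEquiv.prodAssoc (M := Λ) (N := ℤ) (P := ℤ)).toAddMonoidHom
  have h1 := PA.sum_Ioc (PA.comp φ hF) (-((K : ℤ) • τ.comp (AddMonoidHom.fst Λ ℤ)))
    ((K : ℤ) • τ.comp (AddMonoidHom.fst Λ ℤ))
  have h2 := PA.sum_Ioc h1 (-((K : ℤ) • τ)) ((K : ℤ) • τ)
  convert h2 using 1
  ext y
  rw [box, Finset.sum_product]
  simp [φ]

lemma PA.sum_pi (K : ℕ) (q : ℕ) : ∀ {Λ : Type} [AddCommGroup Λ] (τ : Λ →+ ℤ)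
    {F : Λ × (Fin q → ℤ × ℤ) → ℚ} (_ : F ∈ PA (Λ × (Fin q → ℤ × ℤ))),
    (fun y => ∑ z ∈ Fintype.piFinset (fun _ : Fin q => box K (τ y)), F (y, z)) ∈ PA Λ := by
  induction q with
  | zero =>
    intro Λ _ τ F hF
    convert PA.comp ((AddMonoidHom.id Λ).prod (0 : Λ →+ (Fin 0 → ℤ × ℤ))) hF using 1
    ext y
    rw [Finset.sum_eq_single 0]
    · simp
    · intro b _ hb; exact absurd (Subsingleton.elim _ _) hb
    · intro h; exact absurd (Fintype.mem_piFinset.mpr fun i => i.elim0) h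
  | succ q ih =>
    intro Λ _ τ F hF
    let c : (ℤ × ℤ) × (Fin q → ℤ × ℤ) →+ (Fin (q + 1) → ℤ × ℤ) :=
      { toFun := fun p => Fin.cons p.1 p.2
        map_zero' := by
          ext i <;> refine Fin.cases ?_ (fun j => ?_) i <;> simp
        map_add' := by
          intro p p'
          ext i <;> refine Fin.cases ?_ (fun j => ?_) i <;> simp }
    let φ : (Λ × (ℤ × ℤ)) × (Fin q → ℤ × ℤ) →+ Λ × (Fin (q + 1) → ℤ × ℤ) :=
      ((AddMonoidHom.id Λ).prodMap c).comp
        (AddEquiv.prodAssoc (M := Λ) (N := ℤ × ℤ) (P := Fin q → ℤ × ℤ)).toAddMonoidHom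
    have h1 := ih (τ.comp (AddMonoidHom.fst Λ (ℤ × ℤ))) (PA.comp φ hF)
    have h2 := PA.sum_box τ K h1
    convert h2 using 1
    ext y
    change _ = ∑ z ∈ box K (τ y), ∑ z_1 ∈ Fintype.piFinset fun _ : Fin q => box K (τ y),
      F (φ ((y, z), z_1))
    rw [← Finset.sum_product']
    refine Finset.sum_nbij' (fun z => (z 0, Fin.tail z)) (fun p => Fin.cons p.1 p.2) ?_ ?_ ?_ ?_ ?_
    · intro z hz
      simp only [Fintype.mem_piFinset, Finset.mem_product, AddMonoidHom.comp_apply,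
        AddMonoidHom.coe_fst] at hz ⊢
      exact ⟨hz 0, fun i => hz i.succ⟩
    · intro p hp
      simp only [Fintype.mem_piFinset, Finset.mem_product, AddMonoidHom.comp_apply,
        AddMonoidHom.coe_fst] at hp ⊢
      intro i
      refine Fin.cases ?_ (fun j => ?_) i
      · simpa using hp.1
      · simpa using hp.2 j
    · intro z _; simp
    · intro p _; simp
    · intro z _
      simp [φ, c]


open Filter Topology in
lemma poly_lim (P : Polynomial ℝ) (m : ℕ) (h : P.natDegree ≤ m) :
    Tendsto (fun x : ℝ => P.eval x / x ^ m) atTop (𝓝 (P.coeff m)) := by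
  have h1 : ∀ i ∈ Finset.range (m + 1), Tendsto (fun x : ℝ => P.coeff i * (x ^ i / x ^ m)) atTop
      (𝓝 (if i = m then P.coeff m else 0)) := by
    intro i hi
    rw [Finset.mem_range] at hi
    by_cases him : i = m
    · subst him
      simp only [if_true]
      refine tendsto_const_nhds.congr' ?_
      filter_upwards [eventually_gt_atTop (0 : ℝ)] with x hx
      have : x ^ i ≠ 0 := by positivity
      field_simp
    · simp only [him, if_false]
      have := (tendsto_pow_div_pow_atTop_zero (𝕜 := ℝ) (p := i) (q := m) (by omega)).const_mul (P.coeff i)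
      simpa using this
  have h2 := tendsto_finsetSum _ h1
  simp only [Finset.sum_ite_eq', Finset.mem_range, Nat.lt_succ_self, if_true] at h2
  refine h2.congr fun x => ?_
  rw [Polynomial.eval_eq_sum_range' (n := m + 1) (by omega), Finset.sum_div]
  exact Finset.sum_congr rfl fun i _ => by ring

lemma taylor_coeff_top (P : Polynomial ℝ) (d : ℕ) (h : P.natDegree ≤ d) (r : ℝ) :
    (Polynomial.taylor r P).coeff d = P.coeff d := by
  have hh : (Polynomial.taylor r P).coeff d =
      ∑ i ∈ Finset.range (d + 1), ((i.choose d : ℝ) * P.coeff i) * r ^ (i - d) := by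
    rw [Polynomial.taylor_coeff, Polynomial.hasseDeriv_apply, Polynomial.sum_over_range' _ _ (d + 1) (by omega)]
    · simp [Polynomial.eval_finsetSum, Polynomial.eval_monomial]
    · simp
  rw [hh, Finset.sum_eq_single d]
  · simp
  · intro i hi hne
    rw [Finset.mem_range] at hi
    rw [Nat.choose_eq_zero_of_lt (by omega)]; simp
  · simp

lemma taylor_coeff_snd (P : Polynomial ℝ) (d : ℕ) (h : P.natDegree ≤ d + 1) (r : ℝ) :
    (Polynomial.taylor r P).coeff d = P.coeff d + (d + 1) * P.coeff (d + 1) * r := by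
  have hh : (Polynomial.taylor r P).coeff d =
      ∑ i ∈ Finset.range (d + 2), ((i.choose d : ℝ) * P.coeff i) * r ^ (i - d) := by
    rw [Polynomial.taylor_coeff, Polynomial.hasseDeriv_apply, Polynomial.sum_over_range' _ _ (d + 2) (by omega)]
    · simp [Polynomial.eval_finsetSum, Polynomial.eval_monomial]
    · simp
  rw [hh, Finset.sum_range_succ, Finset.sum_range_succ, Finset.sum_eq_zero]
  · simp
  · intro i hi
    rw [Finset.mem_range] at hi
    rw [Nat.choose_eq_zero_of_lt (by omega)]; simp

open Filter Topology in
lemma main_analytic (u : ℕ → ℝ) (p : ℕ) (hp : 0 < p) (f : ℕ → Polynomial ℝ)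
    (hf : ∀ n, u n = (f (n % p)).eval (n : ℝ)) (d : ℕ) (c : ℝ) (hc : c ≠ 0)
    (hlim : Tendsto (fun n : ℕ => u n / (n : ℝ) ^ (d + 1)) atTop (𝓝 c))
    (hconv : ∀ n, 2 * u (n + 1) ≤ u n + u (n + 2)) :
    (∀ k, (f (k % p)).natDegree ≤ d + 1 ∧ (f (k % p)).coeff (d + 1) = c) ∧
    (∀ k, (f (k % p)).coeff d = (f (0 % p)).coeff d) := by
  have hsub : ∀ k, Tendsto (fun j : ℕ => k + p * j) atTop atTop := by
    intro k
    refine tendsto_atTop_mono (fun j => ?_) tendsto_id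
    have : j ≤ p * j := Nat.le_mul_of_pos_left j hp
    simp only [id]; omega
  have hsubR : ∀ k, Tendsto (fun j : ℕ => ((k + p * j : ℕ) : ℝ)) atTop atTop :=
    fun k => tendsto_natCast_atTop_atTop.comp (hsub k)
  have hmod : ∀ k j, (k + p * j) % p = k % p := fun k j => Nat.add_mul_mod_self_left k p j
  have hl : ∀ k, Tendsto (fun j : ℕ => (f (k % p)).eval ((k + p * j : ℕ) : ℝ) /
      ((k + p * j : ℕ) : ℝ) ^ (d + 1)) atTop (𝓝 c) := by
    intro k
    refine (hlim.comp (hsub k)).congr fun j => ?_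
    simp only [Function.comp, hf, hmod]
  have hdeg : ∀ k, (f (k % p)).natDegree ≤ d + 1 := by
    intro k
    by_contra hcon
    push Not at hcon
    have h1 := (poly_lim (f (k % p)) _ le_rfl).comp (hsubR k)
    have h2 := (hl k).mul ((tendsto_pow_div_pow_atTop_zero (𝕜 := ℝ) hcon).comp (hsubR k))
    rw [mul_zero] at h2
    have h3 := tendsto_nhds_unique (h1.congr' ?_) h2
    · rw [Polynomial.coeff_natDegree, Polynomial.leadingCoeff_eq_zero] at h3
      rw [h3] at hcon; simp at hcon
    · filter_upwards [(hsubR k).eventually_gt_atTop 0] with j hj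
      simp only [Function.comp]
      field_simp
  have hco : ∀ k, (f (k % p)).coeff (d + 1) = c := fun k =>
    tendsto_nhds_unique ((poly_lim _ _ (hdeg k)).comp (hsubR k)) (hl k)
  refine ⟨fun k => ⟨hdeg k, hco k⟩, ?_⟩
  have hmono : ∀ n i, u (n + 1) - u n ≤ u (n + i + 1) - u (n + i) := by
    intro n i
    induction i with
    | zero => simp
    | succ i ih =>
      have := hconv (n + i)
      have e : n + (i + 1) + 1 = n + i + 2 := by ring
      have e' : n + (i + 1) = n + i + 1 := by ring
      rw [e, e']; linarith
  have hsum : ∀ n i : ℕ, (i : ℝ) * (u (n + 1) - u n) ≤ u (n + i) - u n := by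
    intro n i
    induction i with
    | zero => simp
    | succ i ih =>
      have := hmono n i
      push_cast
      have e' : n + (i + 1) = n + i + 1 := by ring
      rw [e']; linarith
  have hstep : ∀ k, (f ((k + 1) % p)).coeff d ≤ (f (k % p)).coeff d := by
    intro k
    set F := f (k % p) with hF
    set G := f ((k + 1) % p) with hG
    let H := Polynomial.taylor (p : ℝ) F - F - Polynomial.C (p : ℝ) * (Polynomial.taylor 1 G - F)
    have hHd1 : H.natDegree ≤ d + 1 := by
      have a1 : (Polynomial.taylor (p : ℝ) F).natDegree ≤ d + 1 := by
        rw [Polynomial.natDegree_taylor]; exact hdeg k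
      have a2 : (Polynomial.taylor (1 : ℝ) G).natDegree ≤ d + 1 := by
        rw [Polynomial.natDegree_taylor]; exact hdeg (k + 1)
      exact (Polynomial.natDegree_sub_le _ _).trans (max_le
        ((Polynomial.natDegree_sub_le _ _).trans (max_le a1 (hdeg k)))
        ((Polynomial.natDegree_C_mul_le _ _).trans
          ((Polynomial.natDegree_sub_le _ _).trans (max_le a2 (hdeg k)))))
    have hHtop : H.coeff (d + 1) = 0 := by
      simp only [H, Polynomial.coeff_sub, Polynomial.coeff_C_mul]
      rw [taylor_coeff_top F _ (hdeg k), taylor_coeff_top G _ (hdeg (k + 1)), hF, hG, hco, hco]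
      ring
    have hHd : H.natDegree ≤ d := by
      rw [Polynomial.natDegree_le_iff_coeff_eq_zero]
      intro N hN
      rcases Nat.lt_or_ge (d + 1) N with h | h
      · exact Polynomial.coeff_eq_zero_of_natDegree_lt (lt_of_le_of_lt hHd1 h)
      · have : N = d + 1 := by omega
        rw [this]; exact hHtop
    have hHs : H.coeff d = p * (F.coeff d - G.coeff d) := by
      simp only [H, Polynomial.coeff_sub, Polynomial.coeff_C_mul]
      rw [taylor_coeff_snd F _ (hdeg k), taylor_coeff_snd G _ (hdeg (k + 1)), hF, hG, hco, hco]
      ring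
    have hnn : 0 ≤ H.coeff d := by
      refine ge_of_tendsto ((poly_lim H d hHd).comp (hsubR k)) ?_
      filter_upwards with j
      simp only [Function.comp]
      refine div_nonneg ?_ (by positivity)
      have h1 := hsum (k + p * j) p
      have e1 : (k + p * j + p) % p = k % p := by rw [Nat.add_mod_right, hmod]
      have e2 : (k + p * j + 1) % p = (k + 1) % p := by
        rw [show k + p * j + 1 = (k + 1) + p * j by ring, hmod]
      rw [hf, hf, hf, e1, e2, hmod] at h1
      simp only [H, Polynomial.eval_sub, Polynomial.eval_mul, Polynomial.eval_C, Polynomial.taylor_eval]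
      push_cast at h1 ⊢
      linarith
    rw [hHs] at hnn
    have : (0 : ℝ) < p := by exact_mod_cast hp
    have := nonneg_of_mul_nonneg_right hnn this
    linarith
  have hanti : Antitone (fun k => (f (k % p)).coeff d) := antitone_nat_of_succ_le hstep
  intro k
  apply le_antisymm
  · exact hanti (Nat.zero_le k)
  · have h1 : k ≤ 0 + p * k := by
      have : k ≤ p * k := Nat.le_mul_of_pos_left k hp
      omega
    have := hanti h1
    simp only [hmod] at this
    exact this


/-- embedding of the lattice in the plane -/
def emb (v : ℤ × ℤ) : ℝ × ℝ := ((v.1 : ℝ), (v.2 : ℝ))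

/-- the linear form vanishing along the direction `e.2 - e.1` -/
def LF (e : (ℤ × ℤ) × (ℤ × ℤ)) (u : ℤ × ℤ) : ℤ :=
  (e.2.2 - e.1.2) * u.1 - (e.2.1 - e.1.1) * u.2

/-- the real version of `LF` -/
def LR (e : (ℤ × ℤ) × (ℤ × ℤ)) (x : ℝ × ℝ) : ℝ :=
  ((e.2.2 : ℝ) - e.1.2) * x.1 - ((e.2.1 : ℝ) - e.1.1) * x.2

lemma LR_emb (e : (ℤ × ℤ) × (ℤ × ℤ)) (u : ℤ × ℤ) : LR e (emb u) = LF e u := by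
  simp [LR, LF, emb]

/-- candidates for edges -/
def edges (V : Finset (ℤ × ℤ)) : Finset ((ℤ × ℤ) × (ℤ × ℤ)) :=
  (V ×ˢ V).filter fun e => e.1 ≠ e.2 ∧ ∀ u ∈ V, LF e u ≤ LF e e.1

lemma LR_bound (V : Finset (ℤ × ℤ)) (e) (he : e ∈ edges V) (x : ℝ × ℝ)
    (hx : x ∈ convexHull ℝ (emb '' V)) : LR e x ≤ LF e e.1 := by
  simp only [edges, Finset.mem_filter] at he
  have hconv : Convex ℝ {x : ℝ × ℝ | LR e x ≤ LF e e.1} := by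
    intro y hy z hz a b ha hb hab
    simp only [Set.mem_ofPred_eq, LR, Prod.fst_add, Prod.snd_add, Prod.smul_fst, Prod.smul_snd,
      smul_eq_mul] at hy hz ⊢
    have h1 := mul_le_mul_of_nonneg_left hy ha
    have h2 := mul_le_mul_of_nonneg_left hz hb
    have h3 : a * (LF e e.1 : ℝ) + b * LF e e.1 = LF e e.1 := by rw [← add_mul, hab, one_mul]
    linarith
  have hsub : emb '' V ⊆ {x : ℝ × ℝ | LR e x ≤ LF e e.1} := by
    rintro _ ⟨u, hu, rfl⟩
    simp only [Set.mem_ofPred_eq, LR_emb]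
    exact_mod_cast he.2.2 u hu
  exact convexHull_min hsub hconv hx

lemma LR_strict (V : Finset (ℤ × ℤ)) (e) (he : e ∈ edges V) (x : ℝ × ℝ)
    (hx : x ∈ interior (convexHull ℝ (emb '' V))) : LR e x < LF e e.1 := by
  rw [mem_interior_iff_mem_nhds, Metric.mem_nhds_iff] at hx
  obtain ⟨r, hr, hball⟩ := hx
  have hne : e.1 ≠ e.2 := by
    simp only [edges, Finset.mem_filter] at he; exact he.2.1
  set A : ℝ := (e.2.2 : ℝ) - e.1.2 with hA
  set C : ℝ := (e.2.1 : ℝ) - e.1.1 with hC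
  have hAC : 0 < A ^ 2 + C ^ 2 := by
    by_contra hcon
    have hA0 : A = 0 := by nlinarith [sq_nonneg A, sq_nonneg C]
    have hC0 : C = 0 := by nlinarith [sq_nonneg A, sq_nonneg C]
    apply hne
    have h1 : e.2.2 = e.1.2 := by
      have : (e.2.2 : ℝ) = e.1.2 := by linarith
      exact_mod_cast this
    have h2 : e.2.1 = e.1.1 := by
      have : (e.2.1 : ℝ) = e.1.1 := by linarith
      exact_mod_cast this
    exact Prod.ext h2.symm h1.symm
  set s : ℝ := r / (2 * (1 + |A| + |C|)) with hs
  have hden : 0 < 2 * (1 + |A| + |C|) := by positivity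
  have hs0 : 0 < s := by positivity
  have hsr : s * (2 * (1 + |A| + |C|)) = r := by rw [hs]; field_simp
  have hmem : ((x.1 + s * A, x.2 - s * C) : ℝ × ℝ) ∈ Metric.ball x r := by
    rw [Metric.mem_ball, Prod.dist_eq, max_lt_iff, Real.dist_eq, Real.dist_eq]
    simp only [add_sub_cancel_left, sub_sub_cancel_left, abs_neg, abs_mul, abs_of_pos hs0]
    constructor <;> nlinarith [abs_nonneg A, abs_nonneg C]
  have := LR_bound V e he _ (hball hmem)
  simp only [LR] at this ⊢
  rw [← hA, ← hC] at this ⊢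
  nlinarith

lemma mem_interior_of (V : Finset (ℤ × ℤ)) (hinn : (interior (convexHull ℝ (emb '' V))).Nonempty)
    (x : ℝ × ℝ) (hx : ∀ e ∈ edges V, LR e x < LF e e.1) :
    x ∈ interior (convexHull ℝ (emb '' V)) := by
  by_contra hcon
  set B := convexHull ℝ (emb '' (V : Set (ℤ × ℤ))) with hB
  have hBc : Convex ℝ B := convex_convexHull _ _
  obtain ⟨g, hg⟩ := geometric_hahn_banach_open_point hBc.interior isOpen_interior hcon
  have hgV : ∀ u ∈ V, g (emb u) ≤ g x := by
    intro u hu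
    have h1 : emb u ∈ closure (interior B) := by
      rw [hBc.closure_interior_eq_closure_of_nonempty_interior hinn]
      exact subset_closure (subset_convexHull ℝ _ ⟨u, hu, rfl⟩)
    exact closure_minimal (fun a ha => (hg a ha).le) (isClosed_le g.continuous continuous_const) h1
  set g1 := g (1, 0) with hg1
  set g2 := g (0, 1) with hg2
  have hgx : ∀ y : ℝ × ℝ, g y = g1 * y.1 + g2 * y.2 := by
    intro y
    have : y = y.1 • ((1, 0) : ℝ × ℝ) + y.2 • ((0, 1) : ℝ × ℝ) := by ext <;> simp
    conv_lhs => rw [this, map_add, map_smul, map_smul]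
    simp only [smul_eq_mul, ← hg1, ← hg2]; ring
  have hVne : V.Nonempty := by
    by_contra h
    rw [Finset.not_nonempty_iff_eq_empty] at h
    obtain ⟨c, hc⟩ := hinn
    have := interior_subset hc
    simp [hB, h] at this
  have hnorm : 0 < g1 ^ 2 + g2 ^ 2 := by
    by_contra h
    have h1 : g1 = 0 := by nlinarith [sq_nonneg g1, sq_nonneg g2]
    have h2 : g2 = 0 := by nlinarith [sq_nonneg g1, sq_nonneg g2]
    obtain ⟨c, hc⟩ := hinn
    have := hg c hc
    rw [hgx, hgx x, h1, h2] at this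
    simp at this
  obtain ⟨v, hv, hvmax⟩ := Finset.exists_max_image V (fun u => g (emb u)) hVne
  -- relative coordinates
  let G : ℤ × ℤ → ℝ := fun u => g1 * ((v.1 : ℝ) - u.1) + g2 * ((v.2 : ℝ) - u.2)
  let S : ℤ × ℤ → ℝ := fun u => g1 * ((u.2 : ℝ) - v.2) - g2 * ((u.1 : ℝ) - v.1)
  have hG : ∀ u ∈ V, 0 ≤ G u := by
    intro u hu
    have := hvmax u hu
    simp only [hgx, emb] at this
    simp only [G]; linarith
  have hgxv : 0 ≤ g1 * (x.1 - v.1) + g2 * (x.2 - v.2) := by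
    have := hgV v hv
    simp only [hgx, emb] at this
    linarith
  by_cases hone : ∃ w ∈ V, w ≠ v ∧ G w = 0
  · obtain ⟨w, hw, hwv, hGw⟩ := hone
    have hSw : S w ≠ 0 := by
      intro h0
      apply hwv
      simp only [G, S] at hGw h0
      have e1 : ((w.1 : ℝ) - v.1) * (g1 ^ 2 + g2 ^ 2) = 0 := by linear_combination (-g1) * hGw - g2 * h0
      have e2 : ((w.2 : ℝ) - v.2) * (g1 ^ 2 + g2 ^ 2) = 0 := by linear_combination (-g2) * hGw + g1 * h0
      have e1' := (mul_eq_zero.mp e1).resolve_right hnorm.ne'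
      have e2' := (mul_eq_zero.mp e2).resolve_right hnorm.ne'
      have e1'' : (w.1 : ℝ) = v.1 := by linarith
      have e2'' : (w.2 : ℝ) = v.2 := by linarith
      exact Prod.ext (by exact_mod_cast e1'') (by exact_mod_cast e2'')
    rcases lt_or_gt_of_ne hSw with hS | hS
    · have hid : ∀ y : ℝ × ℝ, (g1 ^ 2 + g2 ^ 2) * (LR (w, v) y - LR (w, v) (emb w)) =
          (- S w) * (g1 * (y.1 - v.1) + g2 * (y.2 - v.2)) := by
        intro y
        simp only [LR, emb, S, G] at hGw ⊢
        linear_combination (-(g1 * (y.2 - v.2) - g2 * (y.1 - v.1))) * hGw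
      have he : (w, v) ∈ edges V := by
        simp only [edges, Finset.mem_filter, Finset.mem_product]
        refine ⟨⟨hw, hv⟩, hwv, fun u hu => ?_⟩
        have h1 := hid (emb u)
        have h2 := hG u hu
        have h3 : (- S w) * (g1 * ((emb u).1 - v.1) + g2 * ((emb u).2 - v.2)) ≤ 0 := by
          apply mul_nonpos_of_nonneg_of_nonpos (by linarith)
          simp only [emb, G] at h2 ⊢; linarith
        have h4 : LR (w, v) (emb u) - LR (w, v) (emb w) ≤ 0 := by
          by_contra hc
          push Not at hc
          have := mul_pos hnorm hc
          linarith
        rw [LR_emb, LR_emb] at h4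
        have : ((LF (w, v) u : ℤ) : ℝ) ≤ LF (w, v) w := by linarith
        exact_mod_cast this
      have h5 := hx _ he
      rw [← LR_emb] at h5
      have h6 := hid x
      have h7 : 0 ≤ (- S w) * (g1 * (x.1 - v.1) + g2 * (x.2 - v.2)) := mul_nonneg (by linarith) hgxv
      simp only at h5
      nlinarith
    · have hid : ∀ y : ℝ × ℝ, (g1 ^ 2 + g2 ^ 2) * (LR (v, w) y - LR (v, w) (emb v)) =
          (S w) * (g1 * (y.1 - v.1) + g2 * (y.2 - v.2)) := by
        intro y
        simp only [LR, emb, S, G] at hGw ⊢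
        linear_combination (g1 * (y.2 - v.2) - g2 * (y.1 - v.1)) * hGw
      have he : (v, w) ∈ edges V := by
        simp only [edges, Finset.mem_filter, Finset.mem_product]
        refine ⟨⟨hv, hw⟩, hwv.symm, fun u hu => ?_⟩
        have h1 := hid (emb u)
        have h2 := hG u hu
        have h3 : (S w) * (g1 * ((emb u).1 - v.1) + g2 * ((emb u).2 - v.2)) ≤ 0 := by
          apply mul_nonpos_of_nonneg_of_nonpos (by linarith)
          simp only [emb, G] at h2 ⊢; linarith
        have h4 : LR (v, w) (emb u) - LR (v, w) (emb v) ≤ 0 := by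
          by_contra hc
          push Not at hc
          have := mul_pos hnorm hc
          linarith
        rw [LR_emb, LR_emb] at h4
        have : ((LF (v, w) u : ℤ) : ℝ) ≤ LF (v, w) v := by linarith
        exact_mod_cast this
      have h5 := hx _ he
      rw [← LR_emb] at h5
      have h6 := hid x
      have h7 : 0 ≤ (S w) * (g1 * (x.1 - v.1) + g2 * (x.2 - v.2)) := mul_nonneg (by linarith) hgxv
      simp only at h5
      nlinarith
  · push Not at hone
    have hGpos : ∀ u ∈ V, u ≠ v → 0 < G u := fun u hu huv =>
      lt_of_le_of_ne (hG u hu) (hone u hu huv).symm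
    have hV' : (V.erase v).Nonempty := by
      by_contra h
      rw [Finset.not_nonempty_iff_eq_empty] at h
      have hVv : V = {v} := by
        rw [← Finset.insert_erase hv, h]; rfl
      have : B = {emb v} := by rw [hB, hVv]; simp
      rw [this, interior_singleton] at hinn
      exact Set.not_nonempty_empty hinn
    have hid : ∀ (w : ℤ × ℤ) (y : ℝ × ℝ), (g1 ^ 2 + g2 ^ 2) * (LR (v, w) y - LR (v, w) (emb v)) =
        G w * (g1 * (y.2 - v.2) - g2 * (y.1 - v.1)) + S w * (g1 * (y.1 - v.1) + g2 * (y.2 - v.2)) := by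
      intro w y
      simp only [LR, emb, S, G]
      ring
    have hidU : ∀ (w u : ℤ × ℤ), (g1 ^ 2 + g2 ^ 2) * (LR (v, w) (emb u) - LR (v, w) (emb v)) =
        G w * S u - S w * G u := by
      intro w u
      rw [hid]; simp only [emb, S, G]; ring
    obtain ⟨w1, hw1, hmax⟩ := Finset.exists_max_image (V.erase v) (fun u => S u / G u) hV'
    obtain ⟨w2, hw2, hmin⟩ := Finset.exists_min_image (V.erase v) (fun u => S u / G u) hV'
    rw [Finset.mem_erase] at hw1 hw2
    have p1 := hGpos w1 hw1.2 hw1.1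
    have p2 := hGpos w2 hw2.2 hw2.1
    have hSv : S v = 0 := by simp [S]
    have hGv : G v = 0 := by simp [G]
    have he1 : (v, w1) ∈ edges V := by
      simp only [edges, Finset.mem_filter, Finset.mem_product]
      refine ⟨⟨hv, hw1.2⟩, hw1.1.symm, fun u hu => ?_⟩
      have h3 : G w1 * S u - S w1 * G u ≤ 0 := by
        by_cases huv : u = v
        · rw [huv, hSv, hGv]; simp
        · have pu := hGpos u hu huv
          have := hmax u (Finset.mem_erase.mpr ⟨huv, hu⟩)
          rw [div_le_div_iff₀ pu p1] at this
          linarith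
      have h4 : LR (v, w1) (emb u) - LR (v, w1) (emb v) ≤ 0 := by
        by_contra hc
        push Not at hc
        have := mul_pos hnorm hc
        rw [hidU] at this
        linarith
      rw [LR_emb, LR_emb] at h4
      have : ((LF (v, w1) u : ℤ) : ℝ) ≤ LF (v, w1) v := by linarith
      exact_mod_cast this
    have hneg : ∀ (w : ℤ × ℤ) (y : ℝ × ℝ), LR (w, v) y - LR (w, v) (emb w) =
        - (LR (v, w) y - LR (v, w) (emb v)) := by
      intro w y; simp only [LR, emb]; ring
    have he2 : (w2, v) ∈ edges V := by
      simp only [edges, Finset.mem_filter, Finset.mem_product]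
      refine ⟨⟨hw2.2, hv⟩, hw2.1, fun u hu => ?_⟩
      have h3 : 0 ≤ G w2 * S u - S w2 * G u := by
        by_cases huv : u = v
        · rw [huv, hSv, hGv]; simp
        · have pu := hGpos u hu huv
          have := hmin u (Finset.mem_erase.mpr ⟨huv, hu⟩)
          rw [div_le_div_iff₀ p2 pu] at this
          linarith
      have h4 : LR (w2, v) (emb u) - LR (w2, v) (emb w2) ≤ 0 := by
        rw [hneg]
        by_contra hc
        push Not at hc
        have := mul_pos hnorm hc
        rw [mul_neg, hidU] at this
        linarith
      rw [LR_emb, LR_emb] at h4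
      have : ((LF (w2, v) u : ℤ) : ℝ) ≤ LF (w2, v) w2 := by linarith
      exact_mod_cast this
    have h1 := hx _ he1
    have h2 := hx _ he2
    rw [← LR_emb] at h1 h2
    simp only at h1 h2
    have h2' := hneg w2 x
    set ex := g1 * (x.2 - v.2) - g2 * (x.1 - v.1) with hex
    set gx := g1 * (x.1 - v.1) + g2 * (x.2 - v.2) with hgxd
    have k1 : G w1 * ex + S w1 * gx < 0 := by
      rw [← hid]; exact mul_neg_of_pos_of_neg hnorm (by linarith)
    have k2 : 0 < G w2 * ex + S w2 * gx := by
      rw [← hid]; exact mul_pos hnorm (by linarith)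
    have k3 : S w2 * G w1 ≤ S w1 * G w2 := by
      have := hmax w2 (Finset.mem_erase.mpr hw2)
      rwa [div_le_div_iff₀ p2 p1] at this
    have k4 : (G w1 * ex + S w1 * gx) * G w2 < 0 := mul_neg_of_neg_of_pos k1 p2
    have k5 : 0 < (G w2 * ex + S w2 * gx) * G w1 := mul_pos k2 p1
    have k6 := mul_le_mul_of_nonneg_right k3 hgxv
    linarith

lemma interior_iff (V : Finset (ℤ × ℤ)) (hinn : (interior (convexHull ℝ (emb '' V))).Nonempty)
    (x : ℝ × ℝ) : x ∈ interior (convexHull ℝ (emb '' V)) ↔ ∀ e ∈ edges V, LR e x < LF e e.1 :=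
  ⟨fun h e he => LR_strict V e he x h, mem_interior_of V hinn x⟩

lemma smul_interior_iff (V : Finset (ℤ × ℤ)) (hinn : (interior (convexHull ℝ (emb '' V))).Nonempty)
    (z : ℤ × ℤ) (n : ℕ) : emb z ∈ ((n : ℝ) + 1) • interior (convexHull ℝ (emb '' V)) ↔
      ∀ e ∈ edges V, LF e z < ((n : ℤ) + 1) * LF e e.1 := by
  have hpos : (0 : ℝ) < (n : ℝ) + 1 := by positivity
  rw [Set.mem_smul_set_iff_inv_smul_mem₀ hpos.ne', interior_iff V hinn]
  refine forall₂_congr fun e _ => ?_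
  have h1 : LR e (((n : ℝ) + 1)⁻¹ • emb z) = ((n : ℝ) + 1)⁻¹ * LF e z := by
    rw [← LR_emb]; simp only [LR, Prod.smul_fst, Prod.smul_snd, smul_eq_mul]; ring
  rw [h1, inv_mul_lt_iff₀ hpos]
  rw [← @Int.cast_lt ℝ]
  push_cast
  rfl

lemma exists_box (V : Finset (ℤ × ℤ)) (hinn : (interior (convexHull ℝ (emb '' V))).Nonempty) :
    ∃ K : ℕ, ∀ (t : ℤ), 0 < t → ∀ z : ℤ × ℤ, (∀ e ∈ edges V, LF e z < t * LF e e.1) →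
      |z.1| < K * t ∧ |z.2| < K * t := by
  have hbd : Bornology.IsBounded (convexHull ℝ (emb '' (V : Set (ℤ × ℤ)))) :=
    isBounded_convexHull.mpr ((V.finite_toSet.image _).isBounded)
  obtain ⟨R, hR⟩ := hbd.exists_norm_le
  refine ⟨⌈R⌉₊ + 1, fun t ht z hz => ?_⟩
  obtain ⟨n, rfl⟩ : ∃ n : ℕ, t = (n : ℤ) + 1 := ⟨(t - 1).toNat, by omega⟩
  have hpos : (0 : ℝ) < (n : ℝ) + 1 := by positivity
  have h1 := (smul_interior_iff V hinn z n).mpr hz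
  rw [Set.mem_smul_set_iff_inv_smul_mem₀ hpos.ne'] at h1
  have h2 := hR _ (interior_subset h1)
  rw [norm_smul, norm_inv, Real.norm_of_nonneg hpos.le, inv_mul_le_iff₀ hpos] at h2
  have h3 : R < (⌈R⌉₊ : ℝ) + 1 := lt_of_le_of_lt (Nat.le_ceil R) (by linarith)
  have h4 : ‖emb z‖ < ((⌈R⌉₊ : ℝ) + 1) * ((n : ℝ) + 1) := by nlinarith
  have h5 := lt_of_le_of_lt (norm_fst_le (emb z)) h4
  have h6 := lt_of_le_of_lt (norm_snd_le (emb z)) h4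
  simp only [emb, Real.norm_eq_abs] at h5 h6
  constructor
  · have : ((|z.1| : ℤ) : ℝ) < (((⌈R⌉₊ + 1 : ℕ) : ℤ) * ((n : ℤ) + 1) : ℤ) := by push_cast; exact h5
    exact_mod_cast this
  · have : ((|z.2| : ℤ) : ℝ) < (((⌈R⌉₊ + 1 : ℕ) : ℤ) * ((n : ℤ) + 1) : ℤ) := by push_cast; exact h6
    exact_mod_cast this


/-- the point lies in the interior of the dilated board -/
def Dom (V : Finset (ℤ × ℤ)) (t : ℤ) (z : ℤ × ℤ) : Prop := ∀ e ∈ edges V, LF e z < t * LF e e.1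

instance (V : Finset (ℤ × ℤ)) (t : ℤ) : DecidablePred (Dom V t) := fun z => by
  unfold Dom; infer_instance

/-- nonattacking points -/
def NA (M : Finset (ℤ × ℤ)) (z w : ℤ × ℤ) : Prop :=
  ∀ m ∈ M, (z.1 - w.1) * m.2 - (z.2 - w.2) * m.1 ≠ 0

instance (M : Finset (ℤ × ℤ)) (z w : ℤ × ℤ) : Decidable (NA M z w) := by
  unfold NA; infer_instance

lemma NA.symm {M : Finset (ℤ × ℤ)} {z w : ℤ × ℤ} (h : NA M z w) : NA M w z := by
  intro m hm h0
  apply h m hm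
  linarith

/-- nonattacking ordered configurations -/
noncomputable def tup (V M : Finset (ℤ × ℤ)) (K q : ℕ) (t : ℤ) : Finset (Fin q → ℤ × ℤ) :=
  (Fintype.piFinset fun _ : Fin q => box K t).filter fun z =>
    (∀ i, Dom V t (z i)) ∧ ∀ i j, i ≠ j → NA M (z i) (z j)

lemma prod_ite_one {ι : Type*} (s : Finset ι) (P : ι → Prop) [DecidablePred P] :
    (∏ i ∈ s, if P i then (1 : ℚ) else 0) = if ∀ i ∈ s, P i then 1 else 0 := by
  split_ifs with h
  · exact Finset.prod_eq_one fun i hi => by simp [h i hi]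
  · push Not at h
    obtain ⟨i, hi, h⟩ := h
    exact Finset.prod_eq_zero hi (by simp [h])

lemma tup_PA (V M : Finset (ℤ × ℤ)) (K q : ℕ) :
    (fun t : ℤ => ((tup V M K q t).card : ℚ)) ∈ PA ℤ := by
  have hF : (fun y : ℤ × (Fin q → ℤ × ℤ) =>
      (∏ i ∈ (Finset.univ : Finset (Fin q)), ∏ e ∈ edges V,
        if 0 < (AddMonoidHom.mk' (fun y : ℤ × (Fin q → ℤ × ℤ) => y.1 * LF e e.1 - LF e (y.2 i))
          (by intro a b; simp [LF]; ring)) y then (1 : ℚ) else 0) *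
      (∏ p ∈ (Finset.univ : Finset (Fin q)).offDiag, ∏ m ∈ M,
        if (AddMonoidHom.mk' (fun y : ℤ × (Fin q → ℤ × ℤ) =>
          ((y.2 p.1).1 - (y.2 p.2).1) * m.2 - ((y.2 p.1).2 - (y.2 p.2).2) * m.1)
          (by intro a b; simp; ring)) y ≠ 0 then (1 : ℚ) else 0)) ∈ PA (ℤ × (Fin q → ℤ × ℤ)) := by
    refine PA.mul (PA.prod _ fun i _ => PA.prod _ fun e _ => PA.pos _)
      (PA.prod _ fun p _ => PA.prod _ fun m _ => PA.ne _)
  have := PA.sum_pi K q (AddMonoidHom.id ℤ) hF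
  convert this using 1
  ext t
  rw [tup, Finset.card_filter]
  push_cast
  refine Finset.sum_congr rfl fun z _ => ?_
  simp only [AddMonoidHom.mk'_apply, prod_ite_one]
  have hmul : ∀ (R P Q : Prop) (_ : Decidable R) (_ : Decidable P) (_ : Decidable Q), (R ↔ P ∧ Q) →
      (if R then (1 : ℚ) else 0) = (if P then (1 : ℚ) else 0) * (if Q then (1 : ℚ) else 0) := by
    intro R P Q _ _ _ h
    by_cases hP : P <;> by_cases hQ : Q <;> simp [h, hP, hQ]
  refine hmul _ _ _ _ _ _ ?_
  simp only [Dom, NA, Finset.mem_univ, true_implies, sub_pos, Finset.mem_offDiag, true_and,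
    Prod.forall]

/-- unordered configurations -/
def sol (V M : Finset (ℤ × ℤ)) (q : ℕ) (t : ℤ) : Set (Finset (ℤ × ℤ)) :=
  {S | S.card = q ∧ (∀ z ∈ S, Dom V t z) ∧ ∀ z ∈ S, ∀ w ∈ S, z ≠ w → NA M z w}

/-- boundedness of the board, with constant `K` -/
def BoxOK (V : Finset (ℤ × ℤ)) (K : ℕ) : Prop := ∀ (t : ℤ), 0 < t → ∀ z : ℤ × ℤ, Dom V t z →
      |z.1| < K * t ∧ |z.2| < K * t

lemma BoxOK.mem {V : Finset (ℤ × ℤ)} {K : ℕ} (h : BoxOK V K) {t : ℤ} (ht : 0 < t) {z : ℤ × ℤ}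
    (hz : Dom V t z) : z ∈ box K t := by
  have := h t ht z hz
  simp only [abs_lt] at this
  simp only [box, Finset.mem_product, Finset.mem_Ioc]
  omega

/-- finset version of `sol` -/
noncomputable def solF (V M : Finset (ℤ × ℤ)) (K q : ℕ) (t : ℤ) : Finset (Finset (ℤ × ℤ)) :=
  ((box K t).powersetCard q).filter fun S => (∀ z ∈ S, Dom V t z) ∧ ∀ z ∈ S, ∀ w ∈ S, z ≠ w → NA M z w

lemma coe_solF {V : Finset (ℤ × ℤ)} {K : ℕ} (h : BoxOK V K) (M : Finset (ℤ × ℤ)) (q : ℕ) {t : ℤ}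
    (ht : 0 < t) : (solF V M K q t : Set (Finset (ℤ × ℤ))) = sol V M q t := by
  ext S
  simp only [solF, Finset.coe_filter, Finset.mem_powersetCard, Set.mem_ofPred_eq, sol]
  constructor
  · rintro ⟨⟨-, h2⟩, h3⟩; exact ⟨h2, h3⟩
  · rintro ⟨h1, h2, h3⟩
    exact ⟨⟨fun z hz => h.mem ht (h2 z hz), h1⟩, h2, h3⟩

lemma card_fiber (q : ℕ) (S : Finset (ℤ × ℤ)) (hS : S.card = q) (T : Finset (Fin q → ℤ × ℤ))
    (hT : ∀ z, z ∈ T ↔ Finset.univ.image z = S) : T.card = q.factorial := by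
  have h1 : Fintype.card (Fin q ≃ S) = q.factorial := by
    rw [Fintype.card_equiv (Fintype.equivOfCardEq (by simp [hS]))]; simp
  rw [← h1, ← Finset.card_univ]
  symm
  refine Finset.card_bij (fun e _ i => ((e i : S) : ℤ × ℤ)) ?_ ?_ ?_
  · intro e _
    rw [hT]
    ext x
    simp only [Finset.mem_image, Finset.mem_univ, true_and]
    constructor
    · rintro ⟨i, rfl⟩; exact (e i).2
    · intro hx; exact ⟨e.symm ⟨x, hx⟩, by simp⟩
  · intro e _ e' _ h
    ext i
    · exact congrArg Prod.fst (congrFun h i)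
    · exact congrArg Prod.snd (congrFun h i)
  · intro z hz
    rw [hT] at hz
    have hmem : ∀ i, z i ∈ S := fun i => hz ▸ Finset.mem_image_of_mem z (Finset.mem_univ i)
    have hsurj : Function.Surjective (fun i => (⟨z i, hmem i⟩ : S)) := by
      rintro ⟨x, hx⟩
      have hx' := hx
      rw [← hz] at hx'
      obtain ⟨i, _, hi⟩ := Finset.mem_image.mp hx'
      exact ⟨i, Subtype.ext hi⟩
    have hbij := (Fintype.bijective_iff_surjective_and_card _).mpr ⟨hsurj, by simp [hS]⟩
    exact ⟨Equiv.ofBijective _ hbij, Finset.mem_univ _, rfl⟩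

lemma card_tup {V : Finset (ℤ × ℤ)} {K : ℕ} (h : BoxOK V K) (M : Finset (ℤ × ℤ)) (hM : M.Nonempty)
    (q : ℕ) {t : ℤ} (ht : 0 < t) : (tup V M K q t).card = (sol V M q t).ncard * q.factorial := by
  rw [← coe_solF h M q ht, Set.ncard_coe_finset]
  have hinj : ∀ z ∈ tup V M K q t, Function.Injective z := by
    intro z hz i j hij
    by_contra hne
    simp only [tup, Finset.mem_filter] at hz
    obtain ⟨m, hm⟩ := hM
    exact hz.2.2 i j hne m hm (by rw [hij]; ring)
  have hmaps : ∀ z ∈ tup V M K q t, Finset.univ.image z ∈ solF V M K q t := by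
    intro z hz
    have hz' := hz
    simp only [tup, Finset.mem_filter, Fintype.mem_piFinset] at hz'
    simp only [solF, Finset.mem_filter, Finset.mem_powersetCard]
    refine ⟨⟨?_, ?_⟩, ?_, ?_⟩
    · intro x hx
      obtain ⟨i, _, rfl⟩ := Finset.mem_image.mp hx
      exact hz'.1 i
    · rw [Finset.card_image_of_injective _ (hinj z hz)]; simp
    · intro x hx
      obtain ⟨i, _, rfl⟩ := Finset.mem_image.mp hx
      exact hz'.2.1 i
    · intro x hx y hy hxy
      obtain ⟨i, _, rfl⟩ := Finset.mem_image.mp hx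
      obtain ⟨j, _, rfl⟩ := Finset.mem_image.mp hy
      exact hz'.2.2 i j (fun hh => hxy (by rw [hh]))
  rw [Finset.card_eq_sum_card_fiberwise hmaps, Finset.sum_const_nat]
  intro S hS
  simp only [solF, Finset.mem_filter, Finset.mem_powersetCard] at hS
  apply card_fiber q S hS.1.2
  intro z
  simp only [Finset.mem_filter, and_iff_right_iff_imp]
  intro hz
  have hmem : ∀ i, z i ∈ S := fun i => hz ▸ Finset.mem_image_of_mem z (Finset.mem_univ i)
  have hzi : Function.Injective z := by
    have : (Finset.univ.image z).card = (Finset.univ : Finset (Fin q)).card := by rw [hz]; simp [hS.1.2]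
    have := Finset.card_image_iff.mp this
    exact fun i j hij => this (by simp) (by simp) hij
  simp only [tup, Finset.mem_filter, Fintype.mem_piFinset]
  exact ⟨fun i => hS.1.1 (hmem i), fun i => hS.2.1 _ (hmem i), fun i j hij =>
    hS.2.2 _ (hmem i) _ (hmem j) (fun hh => hij (hzi hh))⟩

lemma LF_add (e : (ℤ × ℤ) × (ℤ × ℤ)) (a b : ℤ × ℤ) : LF e (a + b) = LF e a + LF e b := by
  simp [LF]; ring

/-- translation of a configuration -/
def tr (w : ℤ × ℤ) (S : Finset (ℤ × ℤ)) : Finset (ℤ × ℤ) := S.map (Equiv.addRight w).toEmbedding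

lemma tr_inj (w : ℤ × ℤ) : Function.Injective (tr w) := Finset.map_injective _

lemma forall_tr (w : ℤ × ℤ) (S : Finset (ℤ × ℤ)) (P : ℤ × ℤ → Prop) :
    (∀ z ∈ tr w S, P z) ↔ ∀ z ∈ S, P (z + w) := by
  simp only [tr, Finset.mem_map_equiv]
  constructor
  · intro h z hz
    exact h (z + w) (by simpa using hz)
  · intro h z hz
    have := h _ hz
    simpa using this

lemma mem_tr (w : ℤ × ℤ) (S : Finset (ℤ × ℤ)) (z : ℤ × ℤ) (hz : z ∈ S) : z + w ∈ tr w S := by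
  simp only [tr, Finset.mem_map_equiv]; simpa using hz

/-- configurations in the board translated so that a vertex is the origin -/
def solh (E : Finset ((ℤ × ℤ) × (ℤ × ℤ))) (h : (ℤ × ℤ) × (ℤ × ℤ) → ℤ) (M : Finset (ℤ × ℤ)) (q : ℕ)
    (t : ℤ) : Set (Finset (ℤ × ℤ)) :=
  {S | S.card = q ∧ (∀ z ∈ S, ∀ e ∈ E, LF e z < t * h e) ∧ ∀ z ∈ S, ∀ w ∈ S, z ≠ w → NA M z w}

lemma NA_add (M : Finset (ℤ × ℤ)) (z w v : ℤ × ℤ) : NA M (z + v) (w + v) ↔ NA M z w := by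
  simp [NA]

lemma tr_NA (M : Finset (ℤ × ℤ)) (v : ℤ × ℤ) (S : Finset (ℤ × ℤ)) :
    (∀ z ∈ tr v S, ∀ w ∈ tr v S, z ≠ w → NA M z w) ↔ ∀ z ∈ S, ∀ w ∈ S, z ≠ w → NA M z w := by
  simp only [forall_tr, NA_add, ne_eq, add_left_inj]

/-- `e` attains the largest relative height -/
def Att (E : Finset ((ℤ × ℤ) × (ℤ × ℤ))) (h : (ℤ × ℤ) × (ℤ × ℤ) → ℤ) (S : Finset (ℤ × ℤ))
    (e : (ℤ × ℤ) × (ℤ × ℤ)) : Prop :=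
  e ∈ E ∧ 0 < h e ∧ ∃ z ∈ S, ∀ e' ∈ E, 0 < h e' → ∀ z' ∈ S, LF e' z' * h e ≤ LF e z * h e'

lemma Att.shift {E : Finset ((ℤ × ℤ) × (ℤ × ℤ))} {h : (ℤ × ℤ) × (ℤ × ℤ) → ℤ}
    {S : Finset (ℤ × ℤ)} {e : (ℤ × ℤ) × (ℤ × ℤ)} (w : ℤ × ℤ) (hw : ∀ e' ∈ E, LF e' w ≤ h e')
    (hwe : LF e w = h e) (ha : Att E h S e) : Att E h (tr w S) e := by
  obtain ⟨he, hpos, z, hz, hmax⟩ := ha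
  refine ⟨he, hpos, z + w, mem_tr w S z hz, fun e' he' hp' => ?_⟩
  rw [forall_tr]
  intro z' hz'
  rw [LF_add, LF_add, hwe]
  nlinarith [hmax e' he' hp' z' hz', mul_le_mul_of_nonneg_right (hw e' he') hpos.le]

lemma Att.unshift {E : Finset ((ℤ × ℤ) × (ℤ × ℤ))} {h : (ℤ × ℤ) × (ℤ × ℤ) → ℤ}
    {S : Finset (ℤ × ℤ)} {e f : (ℤ × ℤ) × (ℤ × ℤ)} (w : ℤ × ℤ) (hw : ∀ e' ∈ E, LF e' w ≤ h e')
    (hwe : LF e w = h e) (ha : Att E h S e) (hf : Att E h (tr w S) f) : Att E h S f := by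
  obtain ⟨he, hpos, z0, hz0, hmax⟩ := ha
  obtain ⟨hfE, hfpos, y, hy, hmax'⟩ := hf
  obtain ⟨z, hz, rfl⟩ : ∃ z ∈ S, z + w = y := by
    by_contra hcon
    push Not at hcon
    exact (forall_tr w S (fun x => x ≠ y)).mpr hcon y hy rfl
  have h1 := hmax' e he hpos (z0 + w) (mem_tr w S z0 hz0)
  rw [LF_add, LF_add, hwe] at h1
  have h2 : LF e z0 * h f ≤ LF f z * h e := by
    nlinarith [mul_le_mul_of_nonneg_right (hw f hfE) hpos.le]
  refine ⟨hfE, hfpos, z, hz, fun e' he' hp' z' hz' => ?_⟩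
  have h3 := hmax e' he' hp' z' hz'
  have h4 := mul_le_mul_of_nonneg_right h3 hfpos.le
  have h5 := mul_le_mul_of_nonneg_right h2 hp'.le
  have h6 : (LF e' z' * h f) * h e ≤ (LF f z * h e') * h e := by nlinarith
  exact le_of_mul_le_mul_right h6 hpos

lemma Att.exists {E : Finset ((ℤ × ℤ) × (ℤ × ℤ))} {h : (ℤ × ℤ) × (ℤ × ℤ) → ℤ}
    {S : Finset (ℤ × ℤ)} (hS : S.Nonempty) (hE : ∃ e ∈ E, 0 < h e) : ∃ e, Att E h S e := by
  obtain ⟨e0, he0, hp0⟩ := hE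
  obtain ⟨z0, hz0⟩ := hS
  obtain ⟨p, hp, hmax⟩ := Finset.exists_max_image ((E.filter fun e => 0 < h e) ×ˢ S)
    (fun p => (LF p.1 p.2 : ℚ) / h p.1)
    ⟨(e0, z0), by simp [he0, hp0, hz0]⟩
  simp only [Finset.mem_product, Finset.mem_filter] at hp
  refine ⟨p.1, hp.1.1, hp.1.2, p.2, hp.2, fun e' he' hp' z' hz' => ?_⟩
  have := hmax (e', z') (by simp [he', hp', hz'])
  simp only at this
  rw [div_le_div_iff₀ (by exact_mod_cast hp') (by exact_mod_cast hp.1.2)] at this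
  exact_mod_cast this

/-- `e` is the first attaining index -/
def First (E : Finset ((ℤ × ℤ) × (ℤ × ℤ))) (h : (ℤ × ℤ) × (ℤ × ℤ) → ℤ) (S : Finset (ℤ × ℤ))
    (e : (ℤ × ℤ) × (ℤ × ℤ)) : Prop :=
  Att E h S e ∧ ∀ f, Att E h S f → Encodable.encode e ≤ Encodable.encode f

lemma First.exists {E : Finset ((ℤ × ℤ) × (ℤ × ℤ))} {h : (ℤ × ℤ) × (ℤ × ℤ) → ℤ}
    {S : Finset (ℤ × ℤ)} (hS : S.Nonempty) (hE : ∃ e ∈ E, 0 < h e) : ∃ e, First E h S e := by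
  classical
  obtain ⟨e, he⟩ := Att.exists hS hE
  obtain ⟨f, hf, hmin⟩ := Finset.exists_min_image (E.filter fun e => Att E h S e)
    (fun e => Encodable.encode e) ⟨e, by simp [he, he.1]⟩
  simp only [Finset.mem_filter] at hf hmin
  exact ⟨f, hf.2, fun g hg => hmin g ⟨hg.1, hg⟩⟩

lemma solh_convex (E : Finset ((ℤ × ℤ) × (ℤ × ℤ))) (h : (ℤ × ℤ) × (ℤ × ℤ) → ℤ) (M : Finset (ℤ × ℤ))
    (q : ℕ) (w : (ℤ × ℤ) × (ℤ × ℤ) → ℤ × ℤ) (hh : ∀ e ∈ E, 0 ≤ h e)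
    (hw : ∀ e ∈ E, ∀ e' ∈ E, LF e' (w e) ≤ h e') (hwe : ∀ e ∈ E, LF e (w e) = h e)
    (t : ℤ) (hfin : ∀ s, t ≤ s → (solh E h M q s).Finite) :
    2 * (solh E h M q (t + 1)).ncard ≤ (solh E h M q t).ncard + (solh E h M q (t + 2)).ncard := by
  have hmono : ∀ s, solh E h M q s ⊆ solh E h M q (s + 1) := by
    rintro s S ⟨h1, h2, h3⟩
    refine ⟨h1, fun z hz e he => ?_, h3⟩
    have := h2 z hz e he
    have := hh e he
    nlinarith
  have key : ∀ S ∈ solh E h M q (t + 1) \ solh E h M q t, ∃ e, First E h S e := by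
    rintro S ⟨⟨h1, h2, h3⟩, h4⟩
    have : ¬ ∀ z ∈ S, ∀ e ∈ E, LF e z < t * h e := fun h5 => h4 ⟨h1, h5, h3⟩
    push Not at this
    obtain ⟨z, hz, e, he, hle⟩ := this
    refine First.exists ⟨z, hz⟩ ⟨e, he, ?_⟩
    have := h2 z hz e he
    linarith
  choose! φ hφ using key
  have hinj : Set.InjOn (fun S => tr (w (φ S)) S) (solh E h M q (t + 1) \ solh E h M q t) := by
    have hfirst : ∀ S ∈ solh E h M q (t + 1) \ solh E h M q t,
        First E h (tr (w (φ S)) S) (φ S) := by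
      intro S hS
      have := hφ S hS
      have he := this.1.1
      exact ⟨this.1.shift _ (hw _ he) (hwe _ he), fun f hf =>
        this.2 f (this.1.unshift _ (hw _ he) (hwe _ he) hf)⟩
    intro S hS S' hS' heq
    simp only at heq
    have f1 := hfirst S hS
    have f2 := hfirst S' hS'
    rw [heq] at f1
    have : φ S = φ S' := Encodable.encode_injective (le_antisymm (f1.2 _ f2.1) (f2.2 _ f1.1))
    rw [this] at heq
    exact tr_inj _ heq
  have hmaps : ∀ S ∈ solh E h M q (t + 1) \ solh E h M q t,
      tr (w (φ S)) S ∈ solh E h M q (t + 2) \ solh E h M q (t + 1) := by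
    intro S hS
    have hF := hφ S hS
    obtain ⟨⟨h1, h2, h3⟩, h4⟩ := hS
    have he := hF.1.1
    obtain ⟨-, hpos, z0, hz0, hmax⟩ := hF.1
    refine ⟨⟨by simpa [tr] using h1, ?_, (tr_NA _ _ _).mpr h3⟩, ?_⟩
    · rw [forall_tr]
      intro z hz e' he'
      rw [LF_add]
      have := h2 z hz e' he'
      have := hw _ he _ he'
      linarith
    · intro hcon
      have h5 := hcon.2.1 _ (mem_tr _ S z0 hz0) _ he
      rw [LF_add, hwe _ he] at h5
      apply h4
      refine ⟨h1, fun z hz e' he' => ?_, h3⟩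
      have h6 := h2 z hz e' he'
      by_contra hle
      push Not at hle
      have hp' : 0 < h e' := by linarith
      have h7 := hmax e' he' hp' z hz
      have h8 := mul_le_mul_of_nonneg_right hle hpos.le
      have h9 : LF (φ S) z0 < t * h (φ S) := by linarith
      have h10 := mul_lt_mul_of_pos_right h9 hp'
      nlinarith
  have hle := Set.ncard_le_ncard_of_injOn _ hmaps hinj ((hfin (t + 2) (by omega)).sdiff)
  have m1 := hmono t
  have m2 := hmono (t + 1)
  rw [show t + 1 + 1 = t + 2 by ring] at m2
  have d1 := Set.ncard_sdiff_add_ncard_of_subset m1 (hfin (t + 1) (by omega))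
  have d2 := Set.ncard_sdiff_add_ncard_of_subset m2 (hfin (t + 2) (by omega))
  omega

lemma sol_finite {V : Finset (ℤ × ℤ)} {K : ℕ} (h : BoxOK V K) (M : Finset (ℤ × ℤ)) (q : ℕ) {t : ℤ}
    (ht : 0 < t) : (sol V M q t).Finite := by
  rw [← coe_solF h M q ht]; exact Finset.finite_toSet _

lemma LF_smul (e : (ℤ × ℤ) × (ℤ × ℤ)) (t : ℤ) (a : ℤ × ℤ) : LF e (t • a) = t * LF e a := by
  simp [LF]; ring

lemma LF_neg (e : (ℤ × ℤ) × (ℤ × ℤ)) (a : ℤ × ℤ) : LF e (-a) = - LF e a := by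
  simp [LF]; ring

lemma sol_convex {V : Finset (ℤ × ℤ)} {K : ℕ} (h : BoxOK V K) (hV : V.Nonempty) (M : Finset (ℤ × ℤ))
    (q : ℕ) {t : ℤ} (ht : 0 < t) :
    2 * (sol V M q (t + 1)).ncard ≤ (sol V M q t).ncard + (sol V M q (t + 2)).ncard := by
  obtain ⟨v, hv⟩ := hV
  have hE : ∀ e ∈ edges V, e.1 ∈ V ∧ ∀ u ∈ V, LF e u ≤ LF e e.1 := by
    intro e he
    simp only [edges, Finset.mem_filter, Finset.mem_product] at he
    exact ⟨he.1.1, he.2.2⟩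
  have himg : ∀ s : ℤ, tr (-(s • v)) '' sol V M q s =
      solh (edges V) (fun e => LF e e.1 - LF e v) M q s := by
    intro s
    have hinv : ∀ S, tr (-(s • v)) (tr (s • v) S) = S := by
      intro S
      ext z
      simp [tr, Finset.mem_map_equiv]
    have hiff : ∀ S, S ∈ sol V M q s ↔
        tr (-(s • v)) S ∈ solh (edges V) (fun e => LF e e.1 - LF e v) M q s := by
      intro S
      simp only [sol, solh, Set.mem_ofPred_eq, Dom]
      refine and_congr (by simp [tr]) (and_congr ?_ (tr_NA _ _ _).symm)
      simp only [forall_tr, LF_add, LF_neg, LF_smul]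
      refine forall₂_congr fun z _ => forall₂_congr fun e _ => ?_
      constructor <;> intro h1 <;> linarith
    ext S
    constructor
    · rintro ⟨S', hS', rfl⟩
      exact (hiff S').mp hS'
    · intro hS
      refine ⟨tr (s • v) S, ?_, hinv S⟩
      rw [hiff, hinv]
      exact hS
  have hcard : ∀ s : ℤ, (sol V M q s).ncard =
      (solh (edges V) (fun e => LF e e.1 - LF e v) M q s).ncard := by
    intro s
    rw [← himg, Set.ncard_image_of_injective _ (tr_inj _)]
  rw [hcard, hcard, hcard]
  have hsub : ∀ e a, LF e (a - v) = LF e a - LF e v := by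
    intro e a; simp [LF]; ring
  refine solh_convex (edges V) _ M q (fun e => e.1 - v) ?_ ?_ ?_ t ?_
  · intro e he
    have := (hE e he).2 v hv
    linarith
  · intro e he e' he'
    have := (hE e' he').2 e.1 (hE e he).1
    rw [hsub]
    linarith
  · intro e he
    rw [hsub]
  · intro s hs
    rw [← himg]
    exact (sol_finite h M q (by omega)).image _

/-- lattice points of the dilated open board -/
noncomputable def dom (V : Finset (ℤ × ℤ)) (K : ℕ) (t : ℤ) : Finset (ℤ × ℤ) := (box K t).filter (Dom V t)

lemma card_line (K : ℕ) (t : ℕ) (m z : ℤ × ℤ) (hm : m ≠ 0) :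
    ((box K t).filter fun w => (w.1 - z.1) * m.2 - (w.2 - z.2) * m.1 = 0).card ≤ 2 * K * t := by
  have hc : (Finset.Ioc (-((K : ℤ) * t)) (K * t)).card = 2 * K * t := by
    rw [Int.card_Ioc]
    have : ((K : ℤ) * t) - (-((K : ℤ) * t)) = ((2 * K * t : ℕ) : ℤ) := by push_cast; ring
    rw [this, Int.toNat_natCast]
  rw [← hc]
  by_cases h1 : m.1 = 0
  · have h2 : m.2 ≠ 0 := fun h => hm (Prod.ext h1 h)
    refine Finset.card_le_card_of_injOn (fun w => w.2) ?_ ?_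
    · intro w hw
      simp only [Finset.coe_filter, Set.mem_ofPred_eq, box, Finset.mem_product] at hw
      exact hw.1.2
    · intro w hw w' hw' heq
      simp only [Finset.coe_filter, Set.mem_ofPred_eq, h1] at hw hw' heq
      refine Prod.ext ?_ heq
      have : (w.1 - w'.1) * m.2 = 0 := by linarith [hw.2, hw'.2]
      have := (mul_eq_zero.mp this).resolve_right h2
      linarith
  · refine Finset.card_le_card_of_injOn (fun w => w.1) ?_ ?_
    · intro w hw
      simp only [Finset.coe_filter, Set.mem_ofPred_eq, box, Finset.mem_product] at hw
      exact hw.1.1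
    · intro w hw w' hw' heq
      simp only [Finset.coe_filter, Set.mem_ofPred_eq] at hw hw' heq
      refine Prod.ext heq ?_
      have h3 := hw.2
      have h4 := hw'.2
      rw [heq] at h3
      have : (w.2 - w'.2) * m.1 = 0 := by linarith
      have := (mul_eq_zero.mp this).resolve_right h1
      linarith

/-- admissible extensions of a configuration -/
noncomputable def extSet (V M : Finset (ℤ × ℤ)) (K q : ℕ) (t : ℤ) (z : Fin q → ℤ × ℤ) : Finset (ℤ × ℤ) :=
  (dom V K t).filter fun w => ∀ i, NA M w (z i)

lemma card_tup_succ (V M : Finset (ℤ × ℤ)) (K q : ℕ) (t : ℤ) :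
    (tup V M K (q + 1) t).card = ∑ z ∈ tup V M K q t, (extSet V M K q t z).card := by
  have hmaps : ∀ z ∈ tup V M K (q + 1) t, Fin.tail z ∈ tup V M K q t := by
    intro z hz
    simp only [tup, Finset.mem_filter, Fintype.mem_piFinset] at hz ⊢
    exact ⟨fun i => hz.1 _, fun i => hz.2.1 _, fun i j hij => hz.2.2 _ _ (by simpa using hij)⟩
  rw [Finset.card_eq_sum_card_fiberwise hmaps]
  refine Finset.sum_congr rfl fun z hz => ?_
  symm
  refine Finset.card_bij (fun w _ => (Fin.cons w z : Fin (q + 1) → ℤ × ℤ)) ?_ ?_ ?_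
  · intro w hw
    simp only [tup, extSet, dom, Finset.mem_filter, Fintype.mem_piFinset] at hz hw ⊢
    refine ⟨⟨?_, ?_, ?_⟩, by simp⟩
    · intro i; refine Fin.cases ?_ (fun i => ?_) i
      · simpa using hw.1.1
      · simpa using hz.1 i
    · intro i; refine Fin.cases ?_ (fun i => ?_) i
      · simpa using hw.1.2
      · simpa using hz.2.1 i
    · intro i j
      refine Fin.cases ?_ (fun i => ?_) i <;> refine Fin.cases ?_ (fun j => ?_) j
      · intro h; exact absurd rfl h
      · intro _; simpa using hw.2 j
      · intro _; simpa using (hw.2 i).symm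
      · intro hij; simpa using hz.2.2 i j (fun h => hij (by rw [h]))
  · intro w _ w' _ h
    simpa using congrFun h 0
  · intro y hy
    simp only [Finset.mem_filter] at hy
    obtain ⟨hy, rfl⟩ := hy
    simp only [tup, Finset.mem_filter, Fintype.mem_piFinset] at hy
    refine ⟨y 0, ?_, Fin.cons_self_tail y⟩
    simp only [extSet, dom, Finset.mem_filter]
    exact ⟨⟨hy.1 0, hy.2.1 0⟩, fun i => hy.2.2 _ _ (Fin.succ_ne_zero i).symm⟩

lemma card_ext_le (V M : Finset (ℤ × ℤ)) (K q : ℕ) (t : ℤ) (z : Fin q → ℤ × ℤ) :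
    (extSet V M K q t z).card ≤ (dom V K t).card := Finset.card_filter_le _ _

lemma le_card_ext (V M : Finset (ℤ × ℤ)) (hM : ∀ m ∈ M, m ≠ 0) (K q : ℕ) (t : ℕ) (z : Fin q → ℤ × ℤ) :
    (dom V K t).card ≤ (extSet V M K q t z).card + q * M.card * (2 * K * t) := by
  classical
  have hsub : dom V K t ⊆ extSet V M K q t z ∪
      ((Finset.univ : Finset (Fin q)) ×ˢ M).biUnion fun p =>
        (box K t).filter fun w => (w.1 - (z p.1).1) * p.2.2 - (w.2 - (z p.1).2) * p.2.1 = 0 := by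
    intro w hw
    by_cases h : w ∈ extSet V M K q t z
    · exact Finset.mem_union_left _ h
    · apply Finset.mem_union_right
      rw [extSet, Finset.mem_filter] at h
      have h' : ∃ i, ¬ NA M w (z i) := by
        by_contra hc
        push Not at hc
        exact h ⟨hw, hc⟩
      obtain ⟨i, h'⟩ := h'
      rw [NA] at h'
      push Not at h'
      obtain ⟨m, hm, h⟩ := h'
      simp only [Finset.mem_biUnion, Finset.mem_product, Finset.mem_univ, true_and, Finset.mem_filter]
      exact ⟨(i, m), hm, (Finset.mem_filter.mp hw).1, h⟩
  refine (Finset.card_le_card hsub).trans ((Finset.card_union_le _ _).trans ?_)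
  refine Nat.add_le_add_left ?_ _
  refine (Finset.card_biUnion_le_card_mul _ _ (2 * K * t) ?_).trans ?_
  · intro p hp
    exact card_line K t p.2 (z p.1) (hM _ (Finset.mem_product.mp hp).2)
  · simp

lemma tup_tendsto (V M : Finset (ℤ × ℤ)) (hM : ∀ m ∈ M, m ≠ 0) (K : ℕ) (c : ℝ)
    (hc : Filter.Tendsto (fun t : ℕ => ((dom V K t).card : ℝ) / (t : ℝ) ^ 2) Filter.atTop (nhds c))
    (q : ℕ) : Filter.Tendsto (fun t : ℕ => ((tup V M K q t).card : ℝ) / (t : ℝ) ^ (2 * q))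
      Filter.atTop (nhds (c ^ q)) := by
  induction q with
  | zero =>
    have : ∀ t : ℕ, (tup V M K 0 t).card = 1 := by
      intro t
      rw [Finset.card_eq_one]
      refine ⟨Fin.elim0, ?_⟩
      ext z
      simp only [tup, Finset.mem_filter, Fintype.mem_piFinset, Finset.mem_singleton]
      constructor
      · intro _; exact Subsingleton.elim _ _
      · intro _; exact ⟨fun i => i.elim0, fun i => i.elim0, fun i => i.elim0⟩
    simp [this]
  | succ q ih =>
    have hup := ih.mul hc
    have hzero : Filter.Tendsto (fun t : ℕ => ((q * M.card * (2 * K) : ℕ) : ℝ) / (t : ℝ))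
        Filter.atTop (nhds 0) := tendsto_const_div_atTop_nhds_zero_nat _
    have hlow := ih.mul (hc.sub hzero)
    rw [sub_zero] at hlow
    rw [pow_succ]
    refine tendsto_of_tendsto_of_tendsto_of_le_of_le' hlow hup ?_ ?_
    · filter_upwards [Filter.eventually_gt_atTop 0] with t ht
      have ht' : (0 : ℝ) < t := by exact_mod_cast ht
      have h1 : (tup V M K q t).card * (dom V K t).card ≤
          (tup V M K (q + 1) t).card + (tup V M K q t).card * (q * M.card * (2 * K * t)) := by
        rw [card_tup_succ, ← smul_eq_mul, ← Finset.sum_const, ← smul_eq_mul (a := (tup V M K q t).card),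
          ← Finset.sum_const, ← Finset.sum_add_distrib]
        exact Finset.sum_le_sum fun z _ => le_card_ext V M hM K q t z
      have h2 : ((tup V M K q t).card : ℝ) * (dom V K t).card ≤
          (tup V M K (q + 1) t).card + (tup V M K q t).card * (q * M.card * (2 * K * t)) := by
        exact_mod_cast h1
      rw [le_div_iff₀ (by positivity)]
      have h3 : ((tup V M K q t).card : ℝ) / (t : ℝ) ^ (2 * q) *
          (((dom V K t).card : ℝ) / (t : ℝ) ^ 2 - ((q * M.card * (2 * K) : ℕ) : ℝ) / (t : ℝ)) *
            (t : ℝ) ^ (2 * (q + 1)) = ((tup V M K q t).card : ℝ) * (dom V K t).card -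
            (tup V M K q t).card * (q * M.card * (2 * K * t)) := by
        rw [show 2 * (q + 1) = 2 * q + 2 by ring, pow_add]
        push_cast
        field_simp
      rw [h3]
      linarith
    · filter_upwards [Filter.eventually_gt_atTop 0] with t ht
      have ht' : (0 : ℝ) < t := by exact_mod_cast ht
      have h1 : (tup V M K (q + 1) t).card ≤ (tup V M K q t).card * (dom V K t).card := by
        rw [card_tup_succ, ← smul_eq_mul, ← Finset.sum_const]
        exact Finset.sum_le_sum fun z _ => card_ext_le V M K q t z
      have h2 : ((tup V M K (q + 1) t).card : ℝ) ≤ (tup V M K q t).card * (dom V K t).card := by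
        exact_mod_cast h1
      rw [div_mul_div_comm, ← pow_add, show 2 * q + 2 = 2 * (q + 1) by ring]
      gcongr

lemma dom_tendsto (V : Finset (ℤ × ℤ)) (hinn : (interior (convexHull ℝ (emb '' V))).Nonempty)
    (K : ℕ) (hK : BoxOK V K) :
    Filter.Tendsto (fun t : ℕ => ((dom V K t).card : ℝ) / (t : ℝ) ^ 2) Filter.atTop
      (nhds (volume (convexHull ℝ (emb '' (V : Set (ℤ × ℤ))))).toReal) := by
  set B := convexHull ℝ (emb '' (V : Set (ℤ × ℤ))) with hB
  have hBc : Convex ℝ B := convex_convexHull _ _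
  have hbd : Bornology.IsBounded B :=
    isBounded_convexHull.mpr ((V.finite_toSet.image _).isBounded)
  let φ : (Fin 2 → ℝ) → ℝ × ℝ := fun x => (x 0, x 1)
  have hφmp : MeasurePreserving φ volume volume := volume_preserving_finTwoArrow ℝ
  have hφc : Continuous φ := by fun_prop
  let φe : (Fin 2 → ℝ) ≃ₜ ℝ × ℝ := Homeomorph.finTwoArrow
  have hφe : (φe : (Fin 2 → ℝ) → ℝ × ℝ) = φ := by ext x <;> rfl
  set s : Set (Fin 2 → ℝ) := φ ⁻¹' interior B with hs
  have hfr : volume (frontier B) = 0 := hBc.addHaar_frontier volume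
  have hfri : volume (frontier (interior B)) = 0 := hBc.interior.addHaar_frontier volume
  have hvolint : volume (interior B) = volume B := by
    refine le_antisymm (measure_mono interior_subset) ?_
    calc volume B ≤ volume (interior B ∪ frontier B) := by
          apply measure_mono
          intro x hx
          by_cases h : x ∈ interior B
          · exact Or.inl h
          · exact Or.inr ⟨subset_closure hx, h⟩
      _ ≤ volume (interior B) + volume (frontier B) := measure_union_le _ _
      _ = volume (interior B) := by rw [hfr, add_zero]
  have hs1 : Bornology.IsBounded s := by
    obtain ⟨R, hR⟩ := hbd.exists_norm_le
    refine isBounded_iff_forall_norm_le.mpr ⟨R, fun x hx => ?_⟩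
    have h := hR _ (interior_subset hx)
    have h1 := (norm_fst_le (φ x)).trans h
    have h2 := (norm_snd_le (φ x)).trans h
    rw [pi_norm_le_iff_of_nonneg ((norm_nonneg _).trans h)]
    intro i
    fin_cases i
    · exact h1
    · exact h2
  have hs2 : MeasurableSet s := (isOpen_interior.preimage hφc).measurableSet
  have hs3 : volume (frontier s) = 0 := by
    have : frontier s = φ ⁻¹' frontier (interior B) := by
      rw [hs, ← hφe]; exact (φe.preimage_frontier _).symm
    rw [this, hφmp.measure_preimage isClosed_frontier.measurableSet.nullMeasurableSet, hfri]
  have main := tendsto_card_div_pow_atTop_volume s hs1 hs2 hs3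
  have hvol : volume.real s = (volume B).toReal := by
    rw [Measure.real, hs, hφmp.measure_preimage isOpen_interior.measurableSet.nullMeasurableSet, hvolint]
  rw [hvol] at main
  refine main.congr' ?_
  filter_upwards [Filter.eventually_gt_atTop 0] with t ht
  have ht' : (0 : ℝ) < t := by exact_mod_cast ht
  rw [Fintype.card_fin]
  congr 2
  rw [Nat.card_coe_set_eq, ← Set.ncard_coe_finset]
  have hiff : ∀ z : ℤ × ℤ, z ∈ dom V K t ↔ (t : ℝ)⁻¹ • emb z ∈ interior B := by
    intro z
    obtain ⟨n, rfl⟩ : ∃ n, t = n + 1 := ⟨t - 1, by omega⟩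
    rw [← Set.mem_smul_set_iff_inv_smul_mem₀ ht'.ne']
    have := smul_interior_iff V hinn z n
    push_cast
    rw [this]
    simp only [dom, Finset.mem_filter]
    constructor
    · rintro ⟨-, h⟩
      have h' := h
      push_cast [Dom] at h'
      exact h'
    · intro h
      have h' : Dom V ((n + 1 : ℕ) : ℤ) z := by push_cast [Dom]; exact h
      exact ⟨hK.mem (by exact_mod_cast ht) h', h'⟩
  symm
  refine Set.ncard_congr (fun z _ => (t : ℝ)⁻¹ • (![(z.1 : ℝ), (z.2 : ℝ)] : Fin 2 → ℝ)) ?_ ?_ ?_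
  · intro z hz
    refine ⟨?_, ?_⟩
    · have := (hiff z).mp hz
      rw [hs, Set.mem_preimage]
      convert this using 1
      ext <;> simp [φ, emb]
    · refine Set.smul_mem_smul_set ?_
      rw [SetLike.mem_coe, Module.Basis.mem_span_iff_repr_mem]
      intro i
      fin_cases i
      · exact ⟨z.1, by simp⟩
      · exact ⟨z.2, by simp⟩
  · intro z w _ _ h
    have h' := smul_right_injective _ (inv_ne_zero ht'.ne') h
    have h0 := congrFun h' 0
    have h1 := congrFun h' 1
    simp at h0 h1
    exact Prod.ext h0 h1
  · rintro x ⟨hx, y, hy, rfl⟩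
    rw [SetLike.mem_coe, Module.Basis.mem_span_iff_repr_mem] at hy
    obtain ⟨a, ha⟩ := hy 0
    obtain ⟨b, hb⟩ := hy 1
    simp at ha hb
    have hyv : y = ![(a : ℝ), (b : ℝ)] := by
      ext i; fin_cases i <;> simp [ha, hb]
    refine ⟨(a, b), ?_, by rw [hyv]⟩
    rw [Finset.mem_coe, hiff]
    rw [hs, Set.mem_preimage] at hx
    convert hx using 1
    ext <;> simp [φ, emb, hyv]

end Riders

/-- if the board polygon has integral vertices, then `u_P(q;n)` is a
quasipolynomial of degree `2q` whose two leading coefficients are the same in every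
constituent; the coefficient of `n^(2q)` is `(vol B)^q / q!`. -/
theorem stmt_2
    (M : Finset (ℤ × ℤ)) (hMne : M.Nonempty)
    (hMmove : ∀ m ∈ M, m ≠ 0 ∧ Int.gcd m.1 m.2 = 1)
    (hMpar : ∀ m ∈ M, ∀ m' ∈ M, m ≠ m' → m.1 * m'.2 - m.2 * m'.1 ≠ 0)
    (V : Finset (ℤ × ℤ))
    (B : Set (ℝ × ℝ))
    (hB : B = convexHull ℝ ((fun v : ℤ × ℤ => (((v.1 : ℝ), (v.2 : ℝ)) : ℝ × ℝ)) '' V))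
    (hBint : (interior B).Nonempty)
    (q : ℕ) (hq : 0 < q)
    (u : ℕ → ℕ)
    (hu : ∀ n : ℕ, u n = Set.ncard {S : Finset (ℤ × ℤ) |
      S.card = q ∧
      (∀ z ∈ S, (((z.1 : ℝ), (z.2 : ℝ)) : ℝ × ℝ) ∈ ((n : ℝ) + 1) • interior B) ∧
      (∀ z ∈ S, ∀ w ∈ S, z ≠ w → ∀ m ∈ M,
        (z.1 - w.1) * m.2 - (z.2 - w.2) * m.1 ≠ 0)}) :
    ∃ p : ℕ, 0 < p ∧ ∃ f : ℕ → Polynomial ℚ,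
      (∀ k < p, (f k).degree = ((2 * q : ℕ) : WithBot ℕ)) ∧
      (∀ k < p, ∀ k' < p,
        (f k).coeff (2 * q) = (f k').coeff (2 * q) ∧
        (f k).coeff (2 * q - 1) = (f k').coeff (2 * q - 1)) ∧
      (∀ k < p,
        ((f k).coeff (2 * q) : ℝ) = (volume B).toReal ^ q / (Nat.factorial q : ℝ)) ∧
      (∀ n : ℕ, (u n : ℚ) = (f (n % p)).eval (n : ℚ)) := by
  have hB' : B = convexHull ℝ (Riders.emb '' (V : Set (ℤ × ℤ))) := hB
  have hinn : (interior (convexHull ℝ (Riders.emb '' (V : Set (ℤ × ℤ))))).Nonempty := hB' ▸ hBint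
  obtain ⟨K, hK⟩ := Riders.exists_box V hinn
  have hK' : Riders.BoxOK V K := hK
  have husol : ∀ n : ℕ, u n = (Riders.sol V M q ((n : ℤ) + 1)).ncard := by
    intro n
    rw [hu]
    congr 1
    ext S
    simp only [Riders.sol, Set.mem_ofPred_eq]
    refine and_congr Iff.rfl (and_congr ?_ Iff.rfl)
    refine forall₂_congr fun z _ => ?_
    rw [hB']
    exact Riders.smul_interior_iff V hinn z n
  have hfac : (q.factorial : ℚ) ≠ 0 := by exact_mod_cast q.factorial_ne_zero
  have hfacR : (q.factorial : ℝ) ≠ 0 := by exact_mod_cast q.factorial_ne_zero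
  have htup : ∀ n : ℕ, (Riders.tup V M K q ((n : ℤ) + 1)).card = u n * q.factorial := by
    intro n
    rw [husol]
    exact Riders.card_tup hK' M hMne q (by positivity)
  obtain ⟨p, hp, g, hg⟩ := Riders.PA_int_qp (Riders.tup_PA V M K q)
  let f : ℕ → Polynomial ℚ := fun k => Polynomial.C ((q.factorial : ℚ)⁻¹) * g k
  have hf : ∀ n : ℕ, (u n : ℚ) = (f (n % p)).eval (n : ℚ) := by
    intro n
    have h1 := hg n
    rw [htup] at h1
    simp only [f, Polynomial.eval_mul, Polynomial.eval_C, ← h1]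
    push_cast
    field_simp
  have hVne : V.Nonempty := by
    by_contra h
    rw [Finset.not_nonempty_iff_eq_empty] at h
    obtain ⟨c, hc⟩ := hinn
    have := interior_subset hc
    simp [h] at this
  have hconv : ∀ n : ℕ, 2 * (u (n + 1) : ℝ) ≤ u n + u (n + 2) := by
    intro n
    have := Riders.sol_convex hK' hVne M q (t := (n : ℤ) + 1) (by positivity)
    have h1 := husol (n + 1)
    have h2 := husol (n + 2)
    push_cast at h1 h2
    rw [show (n : ℤ) + 1 + 2 = (n : ℤ) + 2 + 1 by ring, ← h1, ← h2, ← husol] at this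
    exact_mod_cast this
  set c : ℝ := (volume B).toReal with hc
  have hcpos : 0 < c := by
    have hbd : Bornology.IsBounded B := by
      rw [hB']; exact isBounded_convexHull.mpr ((V.finite_toSet.image _).isBounded)
    refine ENNReal.toReal_pos ?_ hbd.measure_lt_top.ne
    have h1 := isOpen_interior.measure_pos volume hBint
    exact (h1.trans_le (measure_mono interior_subset)).ne'
  have hlim : Filter.Tendsto (fun n : ℕ => (u n : ℝ) / (n : ℝ) ^ (2 * q - 1 + 1)) Filter.atTop
      (nhds (c ^ q / q.factorial)) := by
    have h0 := Riders.tup_tendsto V M (fun m hm => (hMmove m hm).1) K c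
      (by rw [hc, hB']; exact Riders.dom_tendsto V hinn K hK') q
    have h1 := h0.comp (Filter.tendsto_add_atTop_nat 1)
    have h2 : Filter.Tendsto (fun n : ℕ => (((n : ℝ) + 1) / n) ^ (2 * q)) Filter.atTop (nhds (1 ^ (2 * q))) := by
      refine Filter.Tendsto.pow ?_ _
      have h3 : Filter.Tendsto (fun n : ℕ => 1 + (1 : ℝ) / n) Filter.atTop (nhds (1 + 0)) :=
        tendsto_const_nhds.add (tendsto_const_div_atTop_nhds_zero_nat 1)
      rw [add_zero] at h3
      refine h3.congr' ?_
      filter_upwards [Filter.eventually_gt_atTop 0] with n hn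
      have hn' : (n : ℝ) ≠ 0 := by exact_mod_cast hn.ne'
      field_simp
    have h4 := (h1.mul h2).div_const (q.factorial : ℝ)
    rw [one_pow, mul_one] at h4
    refine h4.congr' ?_
    filter_upwards [Filter.eventually_gt_atTop 0] with n hn
    have hn' : (n : ℝ) ≠ 0 := by exact_mod_cast hn.ne'
    have hn1 : (n : ℝ) + 1 ≠ 0 := by positivity
    have h5 := htup n
    simp only [Function.comp]
    push_cast
    rw [h5, show 2 * q - 1 + 1 = 2 * q by omega, div_pow]
    push_cast
    field_simp
  have hne : c ^ q / (q.factorial : ℝ) ≠ 0 := div_ne_zero (pow_pos hcpos q).ne' hfacR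
  obtain ⟨hA, hC⟩ := Riders.main_analytic (fun n => (u n : ℝ)) p hp
    (fun k => (f k).map (algebraMap ℚ ℝ)) (fun n => by
      have h1 := hf n
      have h2 : ((u n : ℚ) : ℝ) = (((f (n % p)).eval (n : ℚ) : ℚ) : ℝ) := by rw [h1]
      have h3 : (n : ℝ) = algebraMap ℚ ℝ (n : ℚ) := by simp
      rw [h3, Polynomial.eval_map_algebraMap, Polynomial.aeval_algebraMap_apply]
      simpa using h2) (2 * q - 1) _ hne hlim hconv
  have hq1 : 2 * q - 1 + 1 = 2 * q := by omega
  rw [hq1] at hA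
  have hlead : ∀ k < p, (((f k).coeff (2 * q) : ℚ) : ℝ) = c ^ q / (q.factorial : ℝ) := by
    intro k hk
    have := (hA k).2
    rw [Nat.mod_eq_of_lt hk] at this
    simpa using this
  have hsub : ∀ k < p, (((f k).coeff (2 * q - 1) : ℚ) : ℝ) =
      (((f (0 % p)).coeff (2 * q - 1) : ℚ) : ℝ) := by
    intro k hk
    have := hC k
    rw [Nat.mod_eq_of_lt hk] at this
    simpa using this
  refine ⟨p, hp, f, ?_, ?_, hlead, hf⟩
  · intro k hk
    have h1 := (hA k).1
    rw [Nat.mod_eq_of_lt hk] at h1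
    simp only [Polynomial.natDegree_map] at h1
    apply le_antisymm (Polynomial.natDegree_le_iff_degree_le.mp h1)
    apply Polynomial.le_degree_of_ne_zero
    intro h0
    have := hlead k hk
    rw [h0] at this
    exact hne (by simpa using this.symm)
  · intro k hk k' hk'
    constructor
    · have := (hlead k hk).trans (hlead k' hk').symm
      exact_mod_cast this
    · have := (hsub k hk).trans (hsub k' hk').symm
      exact_mod_cast this
end

section
/- Let P ⊂ ℝ^d be the convex hull of a finite set of points with rational coordinates, with nonempty interior P°, and let A be a finite set of affine hyperplanes in ℝ^d, each defined by a linear equation with rational coefficients. For a positive integer t let E°_{P,A}(t) be the number of points z ∈ ℤ^d such that (1/t)z lies in P° and on no hyperplane of A. Then E°_{P,A} is a quasipolynomial in t of degree d in which the coefficient of t^d is the constant vol(P) (the Lebesgue volume of P) in every constituent. -/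
open MeasureTheory

namespace Ehr

/-- Piecewise quasipolynomial functions on an abelian group, with homogeneous pieces. -/
inductive CF {M : Type} [AddCommGroup M] : (M → ℚ) → Prop
  | hom (l : M →+ ℤ) : CF (fun x => (l x : ℚ))
  | ind (l : M →+ ℤ) : CF (fun x => if 0 ≤ l x then 1 else 0)
  | per (g : M → ℚ) (p : ℕ) (hp : 0 < p) (h : ∀ x y, g (x + p • y) = g x) : CF g
  | add (f g : M → ℚ) : CF f → CF g → CF (fun x => f x + g x)
  | mul (f g : M → ℚ) : CF f → CF g → CF (fun x => f x * g x)

/-- Quasipolynomials on the integers. -/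
inductive QP : (ℤ → ℚ) → Prop
  | id : QP (fun x => (x : ℚ))
  | per (g : ℤ → ℚ) (p : ℕ) (hp : 0 < p) (h : ∀ x y : ℤ, g (x + p • y) = g x) : QP g
  | add (f g : ℤ → ℚ) : QP f → QP g → QP (fun x => f x + g x)
  | mul (f g : ℤ → ℚ) : QP f → QP g → QP (fun x => f x * g x)

lemma QP.const (q : ℚ) : QP (fun _ => q) := QP.per _ 1 one_pos (fun _ _ => rfl)

lemma QP.sum {ι : Type} (s : Finset ι) (f : ι → ℤ → ℚ) (h : ∀ i ∈ s, QP (f i)) :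
    QP (fun x => ∑ i ∈ s, f i x) := by
  classical
  induction s using Finset.induction_on with
  | empty => simpa using QP.const 0
  | insert a s ha ih =>
    simp only [Finset.sum_insert ha]
    exact QP.add _ _ (h a (by simp)) (ih fun i hi => h i (by simp [hi]))

lemma QP.eval {f : ℤ → ℚ} (hf : QP f) (q : Polynomial ℚ) : QP (fun x => q.eval (f x)) := by
  induction q using Polynomial.induction_on' with
  | add p q hp hq => simpa using QP.add _ _ hp hq
  | monomial n a =>
    simp only [Polynomial.eval_monomial]
    refine QP.mul _ _ (QP.const a) ?_
    induction n with
    | zero => simpa using QP.const 1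
    | succ n ih => simpa [pow_succ] using QP.mul _ _ ih hf

section
variable {M N : Type} [AddCommGroup M] [AddCommGroup N]

lemma CF.const (q : ℚ) : CF (fun _ : M => q) := CF.per _ 1 one_pos (fun _ _ => rfl)

lemma CF.sum {ι : Type} (s : Finset ι) (f : ι → M → ℚ) (h : ∀ i ∈ s, CF (f i)) :
    CF (fun x => ∑ i ∈ s, f i x) := by
  classical
  induction s using Finset.induction_on with
  | empty => simpa using CF.const 0
  | insert a s ha ih =>
    simp only [Finset.sum_insert ha]
    exact CF.add _ _ (h a (by simp)) (ih fun i hi => h i (by simp [hi]))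

lemma CF.prod {ι : Type} (s : Finset ι) (f : ι → M → ℚ) (h : ∀ i ∈ s, CF (f i)) :
    CF (fun x => ∏ i ∈ s, f i x) := by
  classical
  induction s using Finset.induction_on with
  | empty => simpa using CF.const 1
  | insert a s ha ih =>
    simp only [Finset.prod_insert ha]
    exact CF.mul _ _ (h a (by simp)) (ih fun i hi => h i (by simp [hi]))

lemma CF.neg {f : M → ℚ} (hf : CF f) : CF (fun x => - f x) := by
  simpa using CF.mul _ _ (CF.const (-1)) hf

lemma CF.sub {f g : M → ℚ} (hf : CF f) (hg : CF g) : CF (fun x => f x - g x) := by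
  simpa [sub_eq_add_neg] using CF.add _ _ hf hg.neg

lemma CF.comp {f : M → ℚ} (hf : CF f) (φ : N →+ M) : CF (fun x => f (φ x)) := by
  induction hf with
  | hom l => exact CF.hom (l.comp φ)
  | ind l => exact CF.ind (l.comp φ)
  | per g p hp h => exact CF.per _ p hp (fun x y => by simp [h])
  | add f g _ _ hf hg => exact CF.add _ _ hf hg
  | mul f g _ _ hf hg => exact CF.mul _ _ hf hg

/-- composition of a quasipolynomial with a suitable integer valued function. -/
lemma QP.comp {H : ℤ → ℚ} (hH : QP H) (y : M → ℤ) (hy : CF (fun x => (y x : ℚ)))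
    (b : ℕ) (hb : 0 < b) (c : M → ℤ) (hy2 : ∀ (p : ℕ) x w, y (x + (b * p) • w) = y x + p • c w) :
    CF (fun x => H (y x)) := by
  induction hH with
  | id => exact hy
  | per g p hp h =>
    refine CF.per _ (b * p) (by positivity) (fun x w => ?_)
    rw [hy2, h]
  | add f g _ _ hf hg => exact CF.add _ _ hf hg
  | mul f g _ _ hf hg => exact CF.mul _ _ hf hg

lemma QP.toCF {H : ℤ → ℚ} (hH : QP H) : CF H := by
  have := hH.comp (M := ℤ) (fun x => x) (CF.hom (AddMonoidHom.id ℤ)) 1 one_pos (fun x => x)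
    (by intros; simp)
  exact this

end

lemma exists_poly_diff (p : ℕ) (hp : 0 < p) (k : ℕ) :
    ∃ Q : Polynomial ℚ, ∀ z : ℚ, Q.eval (z + p) - Q.eval z = z ^ k := by
  refine ⟨Polynomial.C ((p : ℚ) ^ k / (k + 1)) *
    (Polynomial.bernoulli (k + 1)).comp (Polynomial.C (1 / (p : ℚ)) * Polynomial.X), fun z => ?_⟩
  have hp' : (p : ℚ) ≠ 0 := by positivity
  have hk : (k : ℚ) + 1 ≠ 0 := by positivity
  have h := Polynomial.bernoulli_eval_one_add (k + 1) (z / p)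
  have e : 1 / (p : ℚ) * (z + p) = 1 + z / p := by field_simp; ring
  have e2 : 1 / (p : ℚ) * z = z / p := by field_simp
  simp only [Polynomial.eval_mul, Polynomial.eval_C, Polynomial.eval_comp, Polynomial.eval_X]
  rw [e, e2, h]
  simp only [Nat.add_sub_cancel, Nat.cast_add, Nat.cast_one, div_pow]
  field_simp
  ring

/-- indefinite summation of `ρ(z) z^k`. -/
lemma exists_antidiff (ρ : ℤ → ℚ) (p : ℕ) (hp : 0 < p) (h : ∀ x y : ℤ, ρ (x + p • y) = ρ x)
    (k : ℕ) : ∃ H : ℤ → ℚ, QP H ∧ ∀ z, H (z + 1) - H z = ρ z * (z : ℚ) ^ k := by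
  obtain ⟨Q, hQ⟩ := exists_poly_diff p hp k
  have hp' : (p : ℤ) ≠ 0 := by positivity
  have hpp : (0 : ℤ) < p := by positivity
  refine ⟨fun z => ∑ r ∈ Finset.range p,
    ρ r * Q.eval ((z : ℚ) + (((r - z) % (p : ℤ) : ℤ) : ℚ)), ?_, ?_⟩
  · refine QP.sum _ _ fun r _ => QP.mul _ _ (QP.const _) (QP.eval (QP.add _ _ QP.id ?_) Q)
    refine QP.per _ p hp (fun x y => ?_)
    have : (r : ℤ) - (x + p • y) = r - x + p * (-y) := by simp; ring
    rw [this, Int.add_mul_emod_self_left]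
  · intro z
    rw [← Finset.sum_sub_distrib]
    have hz0 := Int.emod_nonneg z hp'
    have hz1 := Int.emod_lt_of_pos z hpp
    have hzd := Int.emod_add_mul_ediv z p
    rw [Finset.sum_eq_single_of_mem (z % p).toNat]
    · have e1 : (((z % p).toNat : ℕ) : ℤ) = z % p := Int.toNat_of_nonneg hz0
      rw [e1]
      have e2 : (z % p - z) % (p : ℤ) = 0 := by
        rw [show z % p - z = p * (-(z / p)) by linarith]; simp
      have e3 : (z % p - (z + 1)) % (p : ℤ) = p - 1 := by
        rw [show z % p - (z + 1) = (p - 1) + p * (-(z / p) - 1) by linarith,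
          Int.add_mul_emod_self_left]
        exact Int.emod_eq_of_lt (by omega) (by omega)
      rw [e2, e3]
      have e4 : ρ (z % p) = ρ z := by
        conv_rhs => rw [← hzd]
        have := h (z % p) (z / p)
        simpa using this.symm
      rw [e4, ← mul_sub]
      congr 1
      rw [← hQ z]
      push_cast
      congr 2 <;> ring
    · rw [Finset.mem_range]; omega
    · intro r hr hne
      rw [Finset.mem_range] at hr
      rw [sub_eq_zero]
      congr 2
      have : (r - (z + 1)) % (p : ℤ) = (r - z) % p - 1 := by
        have h1 : (r - z) % (p : ℤ) ≠ 0 := by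
          intro h0
          have : (r : ℤ) % p = z % p := Int.emod_eq_emod_iff_emod_sub_eq_zero.2 h0
          rw [Int.emod_eq_of_lt (by omega) (by omega)] at this
          omega
        have h2 := Int.emod_nonneg (r - z) hp'
        have h3 := Int.emod_lt_of_pos (r - z) hpp
        have hd := Int.emod_add_mul_ediv (r - z) p
        rw [show (r : ℤ) - (z + 1) = ((r - z) % p - 1) + p * ((r - z) / p) by linarith,
          Int.add_mul_emod_self_left]
        exact Int.emod_eq_of_lt (by omega) (by omega)
      rw [this]
      push_cast
      ring

section
variable {M : Type} [AddCommGroup M]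

/-- Normal form of piecewise quasipolynomials on `M × ℤ`, with respect to the last variable. -/
inductive NF : (M × ℤ → ℚ) → Prop
  | base (c : M → ℚ) (hc : CF c) (ρ : ℤ → ℚ) (p : ℕ) (hp : 0 < p)
      (h : ∀ x y : ℤ, ρ (x + p • y) = ρ x) (k : ℕ) (l : M × ℤ →+ ℤ) :
      NF (fun x => c x.1 * (ρ x.2 * (x.2 : ℚ) ^ k) * if 0 ≤ l x then 1 else 0)
  | add (f g : M × ℤ → ℚ) : NF f → NF g → NF (fun x => f x + g x)

lemma split_hom (l : M × ℤ →+ ℤ) (x : M × ℤ) : l x = l (x.1, 0) + x.2 * l (0, 1) := by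
  have : x = (x.1, 0) + x.2 • ((0, 1) : M × ℤ) := by
    ext <;> simp
  conv_lhs => rw [this]
  rw [map_add, map_zsmul, smul_eq_mul]

lemma NF.ind_mul (c : M → ℚ) (hc : CF c) (ρ : ℤ → ℚ) (p : ℕ) (hp : 0 < p)
    (h : ∀ x y : ℤ, ρ (x + p • y) = ρ x) (k : ℕ) (l l' : M × ℤ →+ ℤ) :
    NF (fun x => c x.1 * (ρ x.2 * (x.2 : ℚ) ^ k) *
      ((if 0 ≤ l x then 1 else 0) * (if 0 ≤ l' x then 1 else 0))) := by
  set i : M →+ M × ℤ := AddMonoidHom.inl M ℤ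
  have hl : ∀ x, l x = l (i x.1) + x.2 * l (0, 1) := fun x => split_hom l x
  have hl' : ∀ x, l' x = l' (i x.1) + x.2 * l' (0, 1) := fun x => split_hom l' x
  set a := l (0, 1)
  set a' := l' (0, 1)
  have key : ∀ (k₁ : M →+ ℤ) (l₁ : M × ℤ →+ ℤ), NF (fun x =>
      (c x.1 * (if 0 ≤ k₁ x.1 then 1 else 0)) * (ρ x.2 * (x.2 : ℚ) ^ k) *
        if 0 ≤ l₁ x then 1 else 0) := fun k₁ l₁ =>
    NF.base _ (CF.mul _ _ hc (CF.ind k₁)) ρ p hp h k l₁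
  have key' : ∀ (k₁ : M →+ ℤ) (l₁ : M × ℤ →+ ℤ), NF (fun x =>
      (c x.1 * (1 - (if 0 ≤ k₁ x.1 then 1 else 0))) * (ρ x.2 * (x.2 : ℚ) ^ k) *
        if 0 ≤ l₁ x then 1 else 0) := fun k₁ l₁ =>
    NF.base _ (CF.mul _ _ hc ((CF.const 1).sub (CF.ind k₁))) ρ p hp h k l₁
  have keyn : ∀ (k₁ : M →+ ℤ) (l₁ : M × ℤ →+ ℤ), NF (fun x =>
      (c x.1 * (-(if 0 ≤ k₁ x.1 then 1 else 0))) * (ρ x.2 * (x.2 : ℚ) ^ k) *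
        if 0 ≤ l₁ x then 1 else 0) := fun k₁ l₁ =>
    NF.base _ (CF.mul _ _ hc ((CF.ind k₁).neg)) ρ p hp h k l₁
  rcases eq_or_ne a 0 with ha | ha
  · convert! key (l.comp i) l' using 2 with x
    rw [hl x, ha]; simp only [mul_zero, add_zero, AddMonoidHom.comp_apply]; ring
  rcases eq_or_ne a' 0 with ha' | ha'
  · convert! key (l'.comp i) l using 2 with x
    rw [hl' x, ha']; simp only [mul_zero, add_zero, AddMonoidHom.comp_apply]; ring
  by_cases hs : 0 < a * a'
  · have _same_sign := hs
    set K : M →+ ℤ := |a| • (l'.comp i) - |a'| • (l.comp i) with hK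
    have hKx : ∀ x : M × ℤ, K x.1 = |a| * l' x - |a'| * l x := by
      intro x
      have : |a| * a' = |a'| * a := by
        rcases lt_or_gt_of_ne ha with h1 | h1
        · have : a' < 0 := by nlinarith
          rw [abs_of_neg h1, abs_of_neg this]; ring
        · have : 0 < a' := by nlinarith
          rw [abs_of_pos h1, abs_of_pos this]; ring
      rw [hl x, hl' x, hK]
      simp only [AddMonoidHom.sub_apply, AddMonoidHom.smul_apply, AddMonoidHom.comp_apply,
        smul_eq_mul]
      linear_combination (-x.2) * this
    convert! NF.add _ _ (key K l) (key' K l') using 2 with x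
    have hx := hKx x
    have p1 : 0 < |a| := abs_pos.2 ha
    have p2 : 0 < |a'| := abs_pos.2 ha'
    by_cases h0 : 0 ≤ K x.1 <;> by_cases h1 : 0 ≤ l x <;> by_cases h2 : 0 ≤ l' x <;>
      simp only [h0, h1, h2, if_true, if_false] <;> first | ring1 | (exfalso; nlinarith)
  · set K : M →+ ℤ := |a| • (l'.comp i) + |a'| • (l.comp i) with hK
    have hKx : ∀ x : M × ℤ, K x.1 = |a| * l' x + |a'| * l x := by
      intro x
      have : |a| * a' + |a'| * a = 0 := by
        rcases lt_or_gt_of_ne ha with h1 | h1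
        · have : 0 < a' := lt_of_le_of_ne (by nlinarith) ha'.symm
          rw [abs_of_neg h1, abs_of_pos this]; ring
        · have : a' < 0 := lt_of_le_of_ne (by nlinarith) ha'
          rw [abs_of_pos h1, abs_of_neg this]; ring
      rw [hl x, hl' x, hK]
      simp only [AddMonoidHom.add_apply, AddMonoidHom.smul_apply, AddMonoidHom.comp_apply,
        smul_eq_mul]
      linear_combination (-x.2) * this
    convert! NF.add _ _ (NF.add _ _ (key K l) (key K l')) (keyn K 0) using 2 with x
    have hx := hKx x
    have p1 : 0 < |a| := abs_pos.2 ha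
    have p2 : 0 < |a'| := abs_pos.2 ha'
    by_cases h0 : 0 ≤ K x.1 <;> by_cases h1 : 0 ≤ l x <;> by_cases h2 : 0 ≤ l' x <;>
      simp only [h0, h1, h2, if_true, if_false, AddMonoidHom.zero_apply, le_refl] <;>
      first | ring1 | (exfalso; nlinarith)

lemma NF.mul {f g : M × ℤ → ℚ} (hf : NF f) (hg : NF g) : NF (fun x => f x * g x) := by
  induction hf with
  | add f₁ f₂ _ _ h1 h2 =>
    simp only [add_mul]
    exact NF.add _ _ h1 h2
  | base c hc ρ p hp h k l =>
    induction hg with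
    | add g₁ g₂ _ _ h1 h2 =>
      simp only [mul_add]
      exact NF.add _ _ h1 h2
    | base c' hc' ρ' p' hp' h' k' l' =>
      have := NF.ind_mul _ (CF.mul _ _ hc hc') (fun x => ρ x * ρ' x) (p * p') (by positivity)
        (fun x y => by
          rw [mul_smul, h, mul_comm, ← mul_smul, mul_comm, mul_comm p p', mul_smul, h']) (k + k') l l'
      convert! this using 2 with x
      ring

lemma NF.ofLeft {c : M → ℚ} (hc : CF c) : NF (fun x : M × ℤ => c x.1) := by
  have := NF.base c hc (fun _ => 1) 1 one_pos (fun _ _ => rfl) 0 0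
  simpa using this

lemma NF.sum {ι : Type} (s : Finset ι) (f : ι → M × ℤ → ℚ) (h : ∀ i ∈ s, NF (f i)) :
    NF (fun x => ∑ i ∈ s, f i x) := by
  classical
  induction s using Finset.induction_on with
  | empty => simpa using NF.ofLeft (CF.const 0)
  | insert a s ha ih =>
    simp only [Finset.sum_insert ha]
    exact NF.add _ _ (h a (by simp)) (ih fun i hi => h i (by simp [hi]))

lemma CF.toNF {f : M × ℤ → ℚ} (hf : CF f) : NF f := by
  induction hf with
  | hom l =>
    have h1 : NF (fun x : M × ℤ => ((l (x.1, 0) : ℤ) : ℚ)) :=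
      NF.ofLeft (CF.hom (l.comp (AddMonoidHom.inl M ℤ)))
    have h2 := NF.base (M := M) (fun _ => (l (0, 1) : ℚ)) (CF.const _) (fun _ => 1) 1 one_pos
      (fun _ _ => rfl) 1 0
    convert! NF.add _ _ h1 h2 using 2 with x
    rw [split_hom l x]
    simp [mul_comm]
  | ind l =>
    have := NF.base (M := M) (fun _ => 1) (CF.const _) (fun _ => 1) 1 one_pos (fun _ _ => rfl) 0 l
    simpa using this
  | per g p hp h =>
    have hpp : (0 : ℤ) < p := by positivity
    have := NF.sum (Finset.range p) (fun r x => g (x.1, (r : ℤ)) *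
      ((if x.2 % (p : ℤ) = r then 1 else 0) * (x.2 : ℚ) ^ 0) *
        if 0 ≤ (0 : M × ℤ →+ ℤ) x then 1 else 0) (fun r _ =>
        NF.base (fun x => g (x, (r : ℤ))) (CF.per _ p hp (fun x y => by
          have := h (x, (r : ℤ)) (y, 0)
          simpa using this))
          (fun z => if z % (p : ℤ) = r then 1 else 0) p hp (fun x y => by simp) 0 0)
    convert! this using 2 with x
    have hz0 := Int.emod_nonneg x.2 hpp.ne'
    have hz1 := Int.emod_lt_of_pos x.2 hpp
    rw [Finset.sum_eq_single_of_mem (x.2 % p).toNat]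
    · have e1 : (((x.2 % p).toNat : ℕ) : ℤ) = x.2 % p := Int.toNat_of_nonneg hz0
      rw [e1]
      have h3 := h (x.1, x.2 % p) (0, x.2 / p)
      have h4 : (x.1, x.2 % p) + p • ((0 : M), x.2 / (p : ℤ)) = x := by
        ext <;> simp [Int.emod_add_mul_ediv]
      rw [h4] at h3
      simp [h3]
    · rw [Finset.mem_range]; omega
    · intro r hr hne
      rw [if_neg (by omega)]; simp
  | add f g _ _ hf hg => exact NF.add _ _ hf hg
  | mul f g _ _ hf hg => exact NF.mul hf hg

lemma CF.intdiv (m : M →+ ℤ) (b : ℕ) (hb : 0 < b) :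
    CF (fun x => ((m x / (b : ℤ) : ℤ) : ℚ)) := by
  have hb' : (b : ℚ) ≠ 0 := by positivity
  have h1 : CF (fun x : M => ((m x % (b : ℤ) : ℤ) : ℚ)) :=
    CF.per _ b hb (fun x y => by simp)
  convert! CF.mul _ _ (CF.const (1 / (b : ℚ))) (CF.sub (CF.hom m) h1) using 2 with x
  have := Int.emod_add_mul_ediv (m x) b
  have h2 : ((m x % (b : ℤ) : ℤ) : ℚ) + b * ((m x / (b : ℤ) : ℤ) : ℚ) = m x := by
    exact_mod_cast this
  field_simp
  linarith

lemma intdiv_shift (m : M →+ ℤ) (b : ℕ) (hb : 0 < b) (p : ℕ) (x w : M) :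
    m (x + (b * p) • w) / (b : ℤ) = m x / (b : ℤ) + p * m w := by
  rw [map_add, map_nsmul]
  have : m x + (b * p) • m w = m x + b * (p * m w) := by simp; ring
  rw [this, Int.add_mul_ediv_left _ _ (by positivity)]

/-- indefinite summation in the last variable. -/
lemma CF.antidiff {f : M × ℤ → ℚ} (hf : CF f) :
    ∃ G : M × ℤ → ℚ, CF G ∧ ∀ x z, G (x, z + 1) - G (x, z) = f (x, z) := by
  have hn := hf.toNF
  clear hf
  induction hn with
  | add f g _ _ hf hg =>
    obtain ⟨F, hF, hF'⟩ := hf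
    obtain ⟨G, hG, hG'⟩ := hg
    refine ⟨_, CF.add _ _ hF hG, fun x z => ?_⟩
    dsimp only
    rw [← hF', ← hG']; ring
  | base c hc ρ p hp h k l =>
    obtain ⟨H, hH, hH'⟩ := exists_antidiff ρ p hp h k
    set m := l.comp (AddMonoidHom.inl M ℤ) with hm
    have hl : ∀ x z, l (x, z) = m x + z * l (0, 1) := fun x z => split_hom l (x, z)
    set a := l (0, 1) with ha
    have hc' : CF (fun x : M × ℤ => c x.1) := hc.comp (AddMonoidHom.fst M ℤ)
    have hH2 : CF (fun x : M × ℤ => H x.2) := hH.toCF.comp (AddMonoidHom.snd M ℤ)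
    have hy : ∃ y : M → ℤ, CF (fun x => H (y x)) ∧ ∀ x z,
        (0 ≤ l (x, z) → 0 ≤ l (x, z + 1) ∨ y x = z + 1) ∧
        (¬ 0 ≤ l (x, z) → ¬ 0 ≤ l (x, z + 1) ∨ y x = z + 1) := by
      rcases lt_trichotomy a 0 with h1 | h1 | h1
      · obtain ⟨b, hb⟩ : ∃ b : ℕ, (b : ℤ) = -a := ⟨(-a).toNat, by omega⟩
        have hb0 : 0 < b := by omega
        refine ⟨fun x => m x / (b : ℤ) + 1, ?_, ?_⟩
        · refine hH.comp _ ?_ b hb0 (fun w => m w) (fun p x w => ?_)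
          · push_cast
            exact CF.add _ _ (CF.intdiv m b hb0) (CF.const 1)
          · rw [intdiv_shift m b hb0]; simp; ring
        · intro x z
          have e : ∀ z, 0 ≤ l (x, z) ↔ z ≤ m x / (b : ℤ) := by
            intro z
            rw [Int.le_ediv_iff_mul_le (by omega), hl, hb]
            constructor <;> intro <;> linarith
          rw [e, e]
          dsimp only
          omega
      · refine ⟨fun _ => 0, CF.const _, fun x z => ?_⟩
        rw [hl, hl, h1]
        simp
        tauto
      · obtain ⟨b, hb⟩ : ∃ b : ℕ, (b : ℤ) = a := ⟨a.toNat, by omega⟩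
        have hb0 : 0 < b := by omega
        refine ⟨fun x => -(m x / (b : ℤ)), ?_, ?_⟩
        · refine hH.comp _ ?_ b hb0 (fun w => - m w) (fun p x w => ?_)
          · push_cast
            exact CF.neg (CF.intdiv m b hb0)
          · rw [intdiv_shift m b hb0]; simp; ring
        · intro x z
          have e : ∀ z, 0 ≤ l (x, z) ↔ -z ≤ m x / (b : ℤ) := by
            intro z
            rw [Int.le_ediv_iff_mul_le (by omega), hl, hb]
            constructor <;> intro <;> linarith
          rw [e, e]
          dsimp only
          omega
    obtain ⟨y, hy1, hy2⟩ := hy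
    have hy3 : CF (fun x : M × ℤ => H (y x.1)) := hy1.comp (AddMonoidHom.fst M ℤ)
    refine ⟨_, CF.mul _ _ (CF.mul _ _ hc' (CF.sub hH2 hy3)) (CF.ind l), fun x z => ?_⟩
    have := hH' z
    obtain ⟨h3, h4⟩ := hy2 x z
    dsimp only
    rw [← this]
    by_cases h5 : 0 ≤ l (x, z) <;> by_cases h6 : 0 ≤ l (x, z + 1) <;>
      simp only [h5, h6, if_true, if_false]
    · ring
    · rw [(h3 h5).resolve_left h6]; ring
    · rw [(h4 h5).resolve_left (by simpa using h6)]; ring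
    · ring

lemma sum_antidiff (G : ℤ → ℚ) (a : ℤ) (n : ℕ) :
    ∑ z ∈ Finset.Ico a (a + n), (G (z + 1) - G z) = G (a + n) - G a := by
  induction n with
  | zero => simp
  | succ n ih =>
    have : Finset.Ico a (a + ((n + 1 : ℕ) : ℤ)) = insert (a + n) (Finset.Ico a (a + n)) := by
      ext z; simp; omega
    rw [this, Finset.sum_insert (by simp), ih]
    push_cast
    rw [← add_assoc]
    ring

lemma CF.sum_last {f : M × ℤ → ℚ} (hf : CF f) (b : M →+ ℤ) :
    ∃ G : M → ℚ, CF G ∧ ∀ x, 0 ≤ b x → G x = ∑ z ∈ Finset.Ico (-b x) (b x), f (x, z) := by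
  obtain ⟨G, hG, hG'⟩ := hf.antidiff
  refine ⟨fun x => G (x, b x) - G (x, - b x), ?_, ?_⟩
  · exact CF.sub (hG.comp ((AddMonoidHom.id M).prod b)) (hG.comp ((AddMonoidHom.id M).prod (-b)))
  · intro x hx
    have := sum_antidiff (fun z => G (x, z)) (- b x) (2 * b x).toNat
    have e : - b x + ((2 * b x).toNat : ℤ) = b x := by omega
    rw [e] at this
    dsimp only
    rw [← this]
    exact Finset.sum_congr rfl fun z _ => hG' x z

end

lemma CF.sum_box (d : ℕ) : ∀ {M : Type} [AddCommGroup M] (f : M × (Fin d → ℤ) → ℚ), CF f →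
    ∀ (b : M →+ ℤ), ∃ G : M → ℚ, CF G ∧ ∀ x, 0 ≤ b x →
      G x = ∑ z ∈ Fintype.piFinset (fun _ : Fin d => Finset.Ico (-b x) (b x)), f (x, z) := by
  induction d with
  | zero =>
    intro M _ f hf b
    refine ⟨fun x => f (x, 0), hf.comp (AddMonoidHom.inl M (Fin 0 → ℤ)), fun x _ => ?_⟩
    rw [Fintype.piFinset_of_isEmpty, Finset.univ_unique, Finset.sum_singleton]
    exact congrArg f (Prod.ext rfl (Subsingleton.elim _ _))
  | succ d ih =>
    intro M _ f hf b
    let φ : (M × ℤ) × (Fin d → ℤ) →+ M × (Fin (d + 1) → ℤ) :=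
      { toFun := fun x => (x.1.1, Fin.cons x.1.2 x.2)
        map_zero' := by
          ext i
          · rfl
          · refine Fin.cases ?_ (fun i => ?_) i <;> rfl
        map_add' := fun x y => by
          ext i
          · rfl
          · refine Fin.cases ?_ (fun i => ?_) i <;> rfl }
    obtain ⟨G, hG, hG'⟩ := ih _ (hf.comp φ) (b.comp (AddMonoidHom.fst M ℤ))
    obtain ⟨K, hK, hK'⟩ := hG.sum_last b
    refine ⟨K, hK, fun x hx => ?_⟩
    rw [hK' x hx, Finset.sum_congr rfl (fun z _ => hG' (x, z) hx)]
    simp only [AddMonoidHom.comp_apply, AddMonoidHom.coe_fst]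
    rw [← Finset.sum_product']
    refine Finset.sum_bij (fun w _ => Fin.cons w.1 w.2) ?_ ?_ ?_ ?_
    · intro w hw
      simp only [Finset.mem_product, Fintype.mem_piFinset] at hw ⊢
      refine Fin.cases ?_ (fun i => ?_)
      · simpa using hw.1
      · simpa using hw.2 i
    · intro w _ w' _ h
      rw [Fin.cons_inj] at h
      exact Prod.ext h.1 h.2
    · intro w hw
      simp only [Fintype.mem_piFinset] at hw
      refine ⟨(w 0, Fin.tail w), ?_, Fin.cons_self_tail w⟩
      simp only [Finset.mem_product, Fintype.mem_piFinset]
      exact ⟨hw 0, fun i => hw i.succ⟩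
    · intro w _
      rfl

/-- On positive integers, the piecewise quasipolynomials are quasipolynomials. -/
lemma CF.quasi {f : ℤ → ℚ} (hf : CF f) : ∃ p : ℕ, 0 < p ∧ ∃ F : ℕ → Polynomial ℚ,
    ∀ t : ℕ, 0 < t → f t = (F (t % p)).eval (t : ℚ) := by
  have hom : ∀ (l : ℤ →+ ℤ) (t : ℕ), l (t : ℤ) = t * l 1 := by
    intro l t
    have : (t : ℤ) = t • (1 : ℤ) := by simp
    conv_lhs => rw [this]
    rw [map_nsmul]; simp
  induction hf with
  | hom l =>
    refine ⟨1, one_pos, fun _ => Polynomial.C (l 1 : ℚ) * Polynomial.X, fun t _ => ?_⟩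
    dsimp only
    rw [hom]; simp [mul_comm]
  | ind l =>
    refine ⟨1, one_pos, fun _ => Polynomial.C (if 0 ≤ l 1 then 1 else 0), fun t ht => ?_⟩
    have : (0 : ℤ) < t := by exact_mod_cast ht
    dsimp only
    rw [hom, Polynomial.eval_C]
    simp only [mul_nonneg_iff_of_pos_left this]
  | per g p hp h =>
    refine ⟨p, hp, fun k => Polynomial.C (g k), fun t ht => ?_⟩
    rw [Polynomial.eval_C]
    have := h ((t % p : ℕ) : ℤ) ((t / p : ℕ) : ℤ)
    rw [← this]
    congr 1
    have := Nat.mod_add_div t p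
    simp only [nsmul_eq_mul]
    exact_mod_cast this.symm
  | add f g _ _ hf hg =>
    obtain ⟨p, hp, F, hF⟩ := hf
    obtain ⟨q, hq, G, hG⟩ := hg
    refine ⟨p * q, by positivity, fun k => F (k % p) + G (k % q), fun t ht => ?_⟩
    dsimp only
    rw [Polynomial.eval_add, hF t ht, hG t ht, Nat.mod_mul_right_mod, Nat.mod_mul_left_mod]
  | mul f g _ _ hf hg =>
    obtain ⟨p, hp, F, hF⟩ := hf
    obtain ⟨q, hq, G, hG⟩ := hg
    refine ⟨p * q, by positivity, fun k => F (k % p) * G (k % q), fun t ht => ?_⟩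
    dsimp only
    rw [Polynomial.eval_mul, hF t ht, hG t ht, Nat.mod_mul_right_mod, Nat.mod_mul_left_mod]

/-- evaluation of a rational linear form on `ℝ^d × ℝ`. -/
noncomputable def ev {d : ℕ} (h : (Fin d → ℚ) × ℚ) (x : Fin d → ℝ) (s : ℝ) : ℝ :=
  ∑ i, (h.1 i : ℝ) * x i + (h.2 : ℝ) * s

lemma ev_sub {d : ℕ} (h : (Fin d → ℚ) × ℚ) (x v : Fin d → ℝ) (s r : ℝ) :
    ev h (x - r • v) (s - r) = ev h x s - r * ev h v 1 := by
  simp only [ev, Pi.sub_apply, Pi.smul_apply, smul_eq_mul, mul_sub, Finset.sum_sub_distrib,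
    mul_add, Finset.mul_sum]
  have : ∀ i, (h.1 i : ℝ) * (r * v i) = r * (h.1 i * v i) := fun i => by ring
  simp only [this]
  ring

lemma ev_comb {d : ℕ} (g h : (Fin d → ℚ) × ℚ) (a b : ℚ) (x : Fin d → ℝ) (s : ℝ) :
    ev (a • g - b • h) x s = a * ev g x s - b * ev h x s := by
  simp only [ev, Prod.fst_sub, Prod.snd_sub, Prod.smul_fst, Prod.smul_snd, Pi.sub_apply,
    Pi.smul_apply, smul_eq_mul, mul_add, Finset.mul_sum]
  push_cast
  simp only [sub_mul, Finset.sum_sub_distrib, mul_assoc]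
  ring

/-- Fourier-Motzkin elimination: a rational cone is cut out by finitely many inequalities. -/
lemma cone_halfspaces {d : ℕ} (V : Finset (Fin d → ℝ))
    (hV : ∀ v ∈ V, ∀ i : Fin d, ∃ a : ℚ, v i = (a : ℝ)) :
    ∃ H : Finset ((Fin d → ℚ) × ℚ), ∀ (x : Fin d → ℝ) (s : ℝ),
      (∃ w : (Fin d → ℝ) → ℝ, (∀ v ∈ V, 0 ≤ w v) ∧ ∑ v ∈ V, w v = s ∧ ∑ v ∈ V, w v • v = x) ↔
      ∀ h ∈ H, 0 ≤ ev h x s := by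
  classical
  induction V using Finset.induction_on with
  | empty =>
    refine ⟨Finset.univ.image (fun i => ((Pi.single i 1 : Fin d → ℚ), (0 : ℚ))) ∪
      Finset.univ.image (fun i => ((-Pi.single i 1 : Fin d → ℚ), (0 : ℚ))) ∪ {(0, 1), (0, -1)},
      fun x s => ?_⟩
    have e1 : ∀ i, ev ((Pi.single i 1 : Fin d → ℚ), (0 : ℚ)) x s = x i := by
      intro i
      simp only [ev, Pi.single_apply]
      simp [apply_ite (Rat.cast : ℚ → ℝ)]
    have e2 : ∀ i, ev ((-Pi.single i 1 : Fin d → ℚ), (0 : ℚ)) x s = - x i := by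
      intro i
      simp only [ev, Pi.neg_apply, Pi.single_apply]
      simp [apply_ite (Rat.cast : ℚ → ℝ)]
    have e3 : ev ((0 : Fin d → ℚ), (1 : ℚ)) x s = s := by simp [ev]
    have e4 : ev ((0 : Fin d → ℚ), (-1 : ℚ)) x s = -s := by simp [ev]
    constructor
    · rintro ⟨w, -, hs, hx⟩
      simp only [Finset.sum_empty] at hs hx
      subst hs
      subst hx
      intro h _
      simp [ev]
    · intro hh
      have h1 : ∀ i, 0 ≤ x i := fun i => by
        have := hh ((Pi.single i 1 : Fin d → ℚ), (0 : ℚ)) (by simp)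
        rwa [e1] at this
      have h2 : ∀ i, 0 ≤ - x i := fun i => by
        have := hh ((-Pi.single i 1 : Fin d → ℚ), (0 : ℚ)) (by simp)
        rwa [e2] at this
      have h3 := hh (0, 1) (by simp)
      have h4 := hh (0, -1) (by simp)
      rw [e3] at h3
      rw [e4] at h4
      refine ⟨fun _ => 0, by simp, ?_, ?_⟩
      · simp; linarith
      · ext i
        have := h1 i
        have := h2 i
        simp; linarith
  | insert v V hv ih =>
    obtain ⟨H, hH⟩ := ih (fun u hu => hV u (Finset.mem_insert_of_mem hu))
    choose q hq using hV v (Finset.mem_insert_self v V)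
    let e : (Fin d → ℚ) × ℚ → ℚ := fun h => ∑ i, h.1 i * q i + h.2
    have he : ∀ h, ev h v 1 = (e h : ℝ) := by
      intro h
      simp only [ev, e, hq]
      push_cast
      ring
    refine ⟨H.filter (fun h => 0 ≤ e h) ∪
      ((H.filter (fun h => 0 < e h)) ×ˢ (H.filter (fun h => e h < 0))).image
        (fun hg => e hg.1 • hg.2 - e hg.2 • hg.1), fun x s => ?_⟩
    have step : (∃ w : (Fin d → ℝ) → ℝ, (∀ u ∈ insert v V, 0 ≤ w u) ∧
        ∑ u ∈ insert v V, w u = s ∧ ∑ u ∈ insert v V, w u • u = x) ↔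
        ∃ r : ℝ, 0 ≤ r ∧ ∀ h ∈ H, r * e h ≤ ev h x s := by
      have : ∀ r : ℝ, (∀ h ∈ H, r * e h ≤ ev h x s) ↔ ∀ h ∈ H, 0 ≤ ev h (x - r • v) (s - r) := by
        intro r
        refine forall₂_congr fun h _ => ?_
        rw [ev_sub, he, sub_nonneg]
      simp only [this, ← hH]
      constructor
      · rintro ⟨w, h0, h1, h2⟩
        rw [Finset.sum_insert hv] at h1 h2
        refine ⟨w v, h0 v (by simp), w, fun u hu => h0 u (by simp [hu]), ?_, ?_⟩
        · rw [← h1]; ring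
        · rw [← h2]; simp
      · rintro ⟨r, hr, w, h0, h1, h2⟩
        have hne : ∀ u ∈ V, u ≠ v := fun u hu h => hv (h ▸ hu)
        refine ⟨Function.update w v r, ?_, ?_, ?_⟩
        · intro u hu
          rcases Finset.mem_insert.1 hu with rfl | hu
          · simpa using hr
          · rw [Function.update_of_ne (hne u hu)]; exact h0 u hu
        · rw [Finset.sum_insert hv, Function.update_self,
            Finset.sum_congr rfl (fun u hu => Function.update_of_ne (hne u hu) r w), h1]
          ring
        · rw [Finset.sum_insert hv, Function.update_self,
            Finset.sum_congr rfl (fun u hu => by rw [Function.update_of_ne (hne u hu) r w]), h2]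
          simp
    rw [step]
    constructor
    · rintro ⟨r, hr, hh⟩ h hmem
      rcases Finset.mem_union.1 hmem with hm | hm
      · rw [Finset.mem_filter] at hm
        have h1 : (0 : ℝ) ≤ e h := by exact_mod_cast hm.2
        exact le_trans (mul_nonneg hr h1) (hh h hm.1)
      · rw [Finset.mem_image] at hm
        obtain ⟨⟨f, g⟩, hfg, rfl⟩ := hm
        simp only [Finset.mem_product, Finset.mem_filter] at hfg
        obtain ⟨⟨hf, hf'⟩, hg, hg'⟩ := hfg
        have h1 : (0 : ℝ) < e f := by exact_mod_cast hf'
        have h2 : (e g : ℝ) < 0 := by exact_mod_cast hg'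
        rw [ev_comb]
        have := hh f hf
        have := hh g hg
        nlinarith
    · intro hh
      let L : Finset ℝ := insert 0 ((H.filter (fun h => e h < 0)).image
        (fun g => ev g x s / (e g : ℝ)))
      have hL : L.Nonempty := ⟨0, by simp [L]⟩
      refine ⟨L.max' hL, L.le_max' 0 (by simp [L]), fun h hmem => ?_⟩
      rcases lt_trichotomy (e h) 0 with h1 | h1 | h1
      · have h2 : (e h : ℝ) < 0 := by exact_mod_cast h1
        have h3 : ev h x s / (e h : ℝ) ≤ L.max' hL := L.le_max' _ (by
          simp only [L, Finset.mem_insert, Finset.mem_image, Finset.mem_filter]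
          exact Or.inr ⟨h, ⟨hmem, h1⟩, rfl⟩)
        rwa [div_le_iff_of_neg h2] at h3
      · rw [h1]
        have := hh h (by simp [hmem, h1])
        simpa using this
      · have h2 : (0 : ℝ) < e h := by exact_mod_cast h1
        rw [← le_div_iff₀ h2]
        refine L.max'_le hL _ fun y hy => ?_
        rw [le_div_iff₀ h2]
        simp only [L, Finset.mem_insert, Finset.mem_image, Finset.mem_filter] at hy
        rcases hy with rfl | ⟨g, ⟨hg, hg'⟩, rfl⟩
        · have := hh h (by simp [hmem, h1.le])
          simpa using this
        · have h3 : (e g : ℝ) < 0 := by exact_mod_cast hg'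
          have := hh (e h • g - e g • h) (Finset.mem_union_right _ (Finset.mem_image.2
            ⟨(h, g), by simp [hmem, h1, hg, hg'], rfl⟩))
          rw [ev_comb] at this
          rw [div_mul_eq_mul_div, div_le_iff_of_neg h3]
          linarith

/-- functional of a rational vector as continuous linear map -/
noncomputable def fn {d : ℕ} (a : Fin d → ℚ) : (Fin d → ℝ) →L[ℝ] ℝ :=
  ∑ i, (a i : ℝ) • ContinuousLinearMap.proj i

lemma fn_apply {d : ℕ} (a : Fin d → ℚ) (x : Fin d → ℝ) : fn a x = ∑ i, (a i : ℝ) * x i := by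
  simp [fn]

lemma fn_surj {d : ℕ} (a : Fin d → ℚ) (ha : a ≠ 0) : Function.Surjective (fn a) := by
  obtain ⟨i, hi⟩ := Function.ne_iff.1 ha
  have hi' : (a i : ℝ) ≠ 0 := by exact_mod_cast hi
  intro y
  refine ⟨Pi.single i (y / a i), ?_⟩
  rw [fn_apply, Finset.sum_eq_single i]
  · simp; field_simp
  · intro j _ hj; simp [hj]
  · simp

lemma interior_polytope {d : ℕ} (V : Finset (Fin d → ℝ))
    (hV : ∀ v ∈ V, ∀ i : Fin d, ∃ a : ℚ, v i = (a : ℝ))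
    (hPint : (interior (convexHull ℝ (V : Set (Fin d → ℝ)))).Nonempty) :
    ∃ H : Finset ((Fin d → ℚ) × ℚ), ∀ x : Fin d → ℝ,
      x ∈ interior (convexHull ℝ (V : Set (Fin d → ℝ))) ↔ ∀ h ∈ H, 0 < ev h x 1 := by
  classical
  obtain ⟨H, hH⟩ := cone_halfspaces V hV
  have hP : ∀ x, x ∈ convexHull ℝ (V : Set (Fin d → ℝ)) ↔ ∀ h ∈ H, 0 ≤ ev h x 1 := by
    intro x
    rw [← hH, Finset.mem_convexHull']
  obtain ⟨x₀, hx₀⟩ := hPint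
  have hx₀' := (hP x₀).1 (interior_subset hx₀)
  let H' := H.filter (fun h => h.1 ≠ 0)
  have hset : convexHull ℝ (V : Set (Fin d → ℝ)) =
      ⋂ h ∈ H', fn h.1 ⁻¹' (Set.Ici (-(h.2 : ℝ))) := by
    ext x
    rw [hP]
    simp only [Set.mem_iInter, Set.mem_preimage, Set.mem_Ici, H', Finset.mem_filter, fn_apply]
    constructor
    · intro hh h hm
      have := hh h hm.1
      simp only [ev] at this
      linarith
    · intro hh h hm
      by_cases h0 : h.1 = 0
      · have := hx₀' h hm
        simpa [ev, h0] using this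
      · have := hh h ⟨hm, h0⟩
        simp only [ev]
        linarith
  refine ⟨H', fun x => ?_⟩
  rw [hset, Finset.interior_iInter]
  simp only [Set.mem_iInter]
  refine forall₂_congr fun h hm => ?_
  have h0 : h.1 ≠ 0 := (Finset.mem_filter.1 hm).2
  have hopen : IsOpenMap (fn h.1) := (fn h.1).isOpenMap (fn_surj _ h0)
  rw [← hopen.preimage_interior_eq_interior_preimage (fn h.1).continuous, interior_Ici,
    Set.mem_preimage, Set.mem_Ioi, fn_apply]
  simp only [ev]
  constructor <;> intro <;> linarith

/-- clearing denominators -/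
lemma clear_den {d : ℕ} (h : (Fin d → ℚ) × ℚ) : ∃ l : ℤ × (Fin d → ℤ) →+ ℤ, ∃ N : ℕ, 0 < N ∧
    ∀ (t : ℤ) (z : Fin d → ℤ), ((l (t, z) : ℤ) : ℝ) = N * ev h (fun i => (z i : ℝ)) t := by
  obtain ⟨b, hb⟩ := IsLocalization.exist_integer_multiples_of_finite (nonZeroDivisors ℤ)
    (fun o : Option (Fin d) => o.elim h.2 h.1)
  choose c hc using hb
  have hb0 : (b : ℤ) ≠ 0 := nonZeroDivisors.coe_ne_zero b
  let l : ℤ × (Fin d → ℤ) →+ ℤ :=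
    { toFun := fun x => (b : ℤ) * (∑ i, c (some i) * x.2 i + c none * x.1)
      map_zero' := by simp
      map_add' := fun x y => by
        simp only [Prod.fst_add, Prod.snd_add, Pi.add_apply, mul_add, Finset.sum_add_distrib]
        ring }
  refine ⟨l, ((b : ℤ) ^ 2).toNat, ?_, fun t z => ?_⟩
  · have : 0 < (b : ℤ) ^ 2 := by positivity
    omega
  · have e1 : ((((b : ℤ) ^ 2).toNat : ℕ) : ℝ) = ((b : ℤ) : ℝ) ^ 2 := by
      have : ((((b : ℤ) ^ 2).toNat : ℕ) : ℤ) = (b : ℤ) ^ 2 := Int.toNat_of_nonneg (by positivity)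
      exact_mod_cast congrArg (Int.cast : ℤ → ℝ) this
    have e2 : ∀ o : Option (Fin d), ((c o : ℤ) : ℝ) = ((b : ℤ) : ℝ) * ((o.elim h.2 h.1 : ℚ) : ℝ) := by
      intro o
      have := hc o
      simp only [algebraMap_int_eq, eq_intCast, zsmul_eq_mul] at this
      exact_mod_cast congrArg (Rat.cast : ℚ → ℝ) this
    rw [e1]
    simp only [l, AddMonoidHom.coe_mk, ZeroHom.coe_mk, ev]
    push_cast
    simp only [e2, Option.elim_some, Option.elim_none]
    simp only [mul_assoc, ← Finset.mul_sum]
    ring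

lemma ev_div {d : ℕ} (h : (Fin d → ℚ) × ℚ) (z : Fin d → ℝ) (t : ℝ) (ht : 0 < t) :
    ev h z t = t * ev h (fun i => z i / t) 1 := by
  simp only [ev, mul_add, Finset.mul_sum]
  congr 1
  · refine Finset.sum_congr rfl fun i _ => ?_
    field_simp
  · ring

open Filter Topology in
lemma poly_of_tendsto (q : Polynomial ℝ) (d : ℕ) (v : ℝ) (hv : v ≠ 0) (u : ℕ → ℝ)
    (hu : Tendsto u atTop atTop)
    (h : Tendsto (fun n => q.eval (u n) / (u n) ^ d) atTop (𝓝 v)) :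
    q.degree = (d : WithBot ℕ) ∧ q.coeff d = v := by
  have hX : (Polynomial.X ^ d : Polynomial ℝ).degree = (d : WithBot ℕ) := Polynomial.degree_X_pow d
  have hev : ∀ x : ℝ, (Polynomial.X ^ d : Polynomial ℝ).eval x = x ^ d := by simp
  rcases lt_trichotomy q.degree (d : WithBot ℕ) with h1 | h1 | h1
  · exfalso
    have := (Polynomial.div_tendsto_atTop_zero_of_degree_lt q (Polynomial.X ^ d) (by rwa [hX])).comp hu
    simp only [Function.comp_def, hev] at this
    exact hv (tendsto_nhds_unique h this)
  · refine ⟨h1, ?_⟩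
    have := (Polynomial.div_tendsto_atTop_leadingCoeff_div_of_degree_eq q (Polynomial.X ^ d)
      (by rw [hX, h1])).comp hu
    simp only [Function.comp_def, hev] at this
    have h2 := tendsto_nhds_unique h this
    rw [h2, Polynomial.leadingCoeff, Polynomial.natDegree_eq_of_degree_eq_some h1]
    simp
  · exfalso
    have := (Polynomial.abs_div_tendsto_atTop_atTop_of_degree_gt q (Polynomial.X ^ d) (by rwa [hX])
      (pow_ne_zero _ Polynomial.X_ne_zero)).comp hu
    simp only [Function.comp_def, hev] at this
    exact not_tendsto_nhds_of_tendsto_atTop this _ h.abs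

/-- The volume part: lattice point counting asymptotics. -/
lemma count_tendsto (d : ℕ) (P : Set (Fin d → ℝ)) (hconv : Convex ℝ P)
    (hb : Bornology.IsBounded P) (A : Finset ((Fin d → ℚ) × ℚ)) (hA : ∀ ab ∈ A, ab.1 ≠ 0)
    (E : ℕ → ℕ)
    (hE : ∀ t : ℕ, 0 < t → E t = Set.ncard {z : Fin d → ℤ |
      (fun i => (z i : ℝ) / (t : ℝ)) ∈ interior P ∧
      ∀ ab ∈ A, (∑ i : Fin d, (ab.1 i : ℝ) * ((z i : ℝ) / (t : ℝ))) ≠ (ab.2 : ℝ)}) :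
    Filter.Tendsto (fun t : ℕ => (E t : ℝ) / (t : ℝ) ^ d) Filter.atTop
      (nhds (volume P).toReal) := by
  classical
  let U : Set (Fin d → ℝ) := ⋃ ab ∈ A, fn ab.1 ⁻¹' {(ab.2 : ℝ)}
  have hUcl : IsClosed U := by
    refine A.finite_toSet.isClosed_biUnion fun ab _ => ?_
    exact isClosed_singleton.preimage (fn ab.1).continuous
  have hU0 : volume U = 0 := by
    refine (measure_biUnion_null_iff A.countable_toSet).2 fun ab hab => ?_
    let S : AffineSubspace ℝ (Fin d → ℝ) :=
      (AffineSubspace.mk' (ab.2 : ℝ) (⊥ : Submodule ℝ ℝ)).comap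
        (fn ab.1 : (Fin d → ℝ) →ₗ[ℝ] ℝ).toAffineMap
    have hS : (S : Set (Fin d → ℝ)) = fn ab.1 ⁻¹' {(ab.2 : ℝ)} := by
      ext x
      simp [S, AffineSubspace.mem_mk', sub_eq_zero]
    rw [← hS]
    refine Measure.addHaar_affineSubspace volume S fun htop => ?_
    obtain ⟨x, hx⟩ := fn_surj ab.1 (hA ab hab) ((ab.2 : ℝ) + 1)
    have : x ∈ (S : Set (Fin d → ℝ)) := by rw [htop]; trivial
    rw [hS, Set.mem_preimage, hx] at this
    simp at this
  have hfr : volume (frontier P) = 0 := hconv.addHaar_frontier volume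
  let s := interior P \ U
  have hsb : Bornology.IsBounded s := hb.subset (Set.sdiff_subset.trans interior_subset)
  have hsm : MeasurableSet s := (isOpen_interior.sdiff hUcl).measurableSet
  have hsf : volume (frontier s) = 0 := by
    refine measure_mono_null (t := frontier P ∪ U) ?_ (measure_union_null hfr hU0)
    intro x hx
    rw [(isOpen_interior.sdiff hUcl).frontier_eq] at hx
    obtain ⟨hx1, hx2⟩ := hx
    have hx3 : x ∈ closure P := closure_mono (Set.sdiff_subset.trans interior_subset) hx1
    by_cases hxU : x ∈ U
    · exact Or.inr hxU
    · exact Or.inl ⟨hx3, fun hi => hx2 ⟨hi, hxU⟩⟩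
  have hvol : volume s = volume P := by
    refine le_antisymm (measure_mono (Set.sdiff_subset.trans interior_subset)) ?_
    have : P ⊆ s ∪ (frontier P ∪ U) := by
      intro x hx
      by_cases hxU : x ∈ U
      · exact Or.inr (Or.inr hxU)
      · by_cases hi : x ∈ interior P
        · exact Or.inl ⟨hi, hxU⟩
        · exact Or.inr (Or.inl ⟨subset_closure hx, hi⟩)
    calc volume P ≤ volume (s ∪ (frontier P ∪ U)) := measure_mono this
      _ ≤ volume s + volume (frontier P ∪ U) := measure_union_le _ _
      _ = volume s := by rw [measure_union_null hfr hU0, add_zero]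
  have key := tendsto_card_div_pow_atTop_volume s hsb hsm hsf
  rw [Measure.real, hvol] at key
  refine key.congr' ?_
  filter_upwards [Filter.eventually_gt_atTop 0] with t ht
  have ht' : (t : ℝ) ≠ 0 := by positivity
  rw [Fintype.card_fin, hE t ht]
  congr 2
  rw [Nat.card_coe_set_eq]
  have hinj : Function.Injective (fun (z : Fin d → ℤ) (i : Fin d) => (z i : ℝ) / (t : ℝ)) := by
    intro z w hzw
    ext i
    have := congrFun hzw i
    simp only at this
    rw [div_left_inj' ht'] at this
    exact_mod_cast this
  rw [← Set.ncard_image_of_injective _ hinj]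
  congr 1
  ext x
  rw [Set.mem_inter_iff, Set.mem_smul_set_iff_inv_smul_mem₀ (inv_ne_zero ht'), inv_inv]
  have hmem : ∀ x : Fin d → ℝ, x ∈ s ↔ x ∈ interior P ∧
      ∀ ab ∈ A, (∑ i : Fin d, (ab.1 i : ℝ) * x i) ≠ (ab.2 : ℝ) := by
    intro x
    simp [s, U, fn_apply]
  have hspan : ∀ y : Fin d → ℝ, y ∈ (Submodule.span ℤ (Set.range (Pi.basisFun ℝ (Fin d))) :
      Set (Fin d → ℝ)) ↔ ∃ z : Fin d → ℤ, (fun i => (z i : ℝ)) = y := by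
    intro y
    rw [SetLike.mem_coe, Module.Basis.mem_span_iff_repr_mem]
    simp only [Pi.basisFun_repr, Set.mem_range, algebraMap_int_eq, eq_intCast]
    constructor
    · intro h
      choose z hz using h
      exact ⟨z, funext hz⟩
    · rintro ⟨z, rfl⟩ i
      exact ⟨z i, rfl⟩
  rw [hspan]
  constructor
  · rintro ⟨hx, z, hz⟩
    have hxz : (fun i => (z i : ℝ) / (t : ℝ)) = x := by
      ext i
      have := congrFun hz i
      simp only [Pi.smul_apply, smul_eq_mul] at this
      rw [this]; field_simp
    refine ⟨z, ?_, hxz⟩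
    have := (hmem x).1 hx
    rw [← hxz] at this
    exact this
  · rintro ⟨z, hz, rfl⟩
    refine ⟨(hmem _).2 hz, z, ?_⟩
    ext i
    simp only [Pi.smul_apply, smul_eq_mul]
    field_simp

/-- The counting function is a quasipolynomial on positive integers. -/
lemma count_quasi (d : ℕ) (V : Finset (Fin d → ℝ))
    (hV : ∀ v ∈ V, ∀ i : Fin d, ∃ a : ℚ, v i = (a : ℝ))
    (P : Set (Fin d → ℝ)) (hP : P = convexHull ℝ (V : Set (Fin d → ℝ)))
    (hPint : (interior P).Nonempty) (hb : Bornology.IsBounded P)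
    (A : Finset ((Fin d → ℚ) × ℚ))
    (E : ℕ → ℕ)
    (hE : ∀ t : ℕ, 0 < t → E t = Set.ncard {z : Fin d → ℤ |
      (fun i => (z i : ℝ) / (t : ℝ)) ∈ interior P ∧
      ∀ ab ∈ A, (∑ i : Fin d, (ab.1 i : ℝ) * ((z i : ℝ) / (t : ℝ))) ≠ (ab.2 : ℝ)}) :
    ∃ p : ℕ, 0 < p ∧ ∃ F : ℕ → Polynomial ℚ,
      ∀ t : ℕ, 0 < t → (E t : ℚ) = (F (t % p)).eval (t : ℚ) := by
  classical
  obtain ⟨H, hH⟩ := interior_polytope V hV (hP ▸ hPint)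
  rw [← hP] at hH
  choose l N hN hl using fun h : (Fin d → ℚ) × ℚ => clear_den h
  let F : ℤ × (Fin d → ℤ) → ℚ := fun x =>
    (∏ h ∈ H, (1 - if 0 ≤ (-l h) x then 1 else 0)) *
    ∏ ab ∈ A, (1 - (if 0 ≤ (l (ab.1, -ab.2)) x then 1 else 0) *
      (if 0 ≤ (-l (ab.1, -ab.2)) x then 1 else 0))
  have hF : CF F := by
    refine CF.mul _ _ (CF.prod _ _ fun h _ => ?_) (CF.prod _ _ fun ab _ => ?_)
    · exact (CF.const 1).sub (CF.ind _)
    · exact (CF.const 1).sub (CF.mul _ _ (CF.ind _) (CF.ind _))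
  have hFval : ∀ (t : ℕ), 0 < t → ∀ z : Fin d → ℤ, F ((t : ℤ), z) =
      if ((fun i => (z i : ℝ) / (t : ℝ)) ∈ interior P ∧
      ∀ ab ∈ A, (∑ i : Fin d, (ab.1 i : ℝ) * ((z i : ℝ) / (t : ℝ))) ≠ (ab.2 : ℝ)) then 1 else 0 := by
    intro t ht z
    have ht' : (0 : ℝ) < t := by exact_mod_cast ht
    have hlv : ∀ h, ((l h ((t : ℤ), z) : ℤ) : ℝ) =
        (N h * t) * ev h (fun i => (z i : ℝ) / (t : ℝ)) 1 := by
      intro h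
      rw [hl, Int.cast_natCast, ev_div h _ _ ht']
      ring
    have hpos : ∀ h, (0 : ℝ) < N h * t := fun h => by
      have : (0 : ℝ) < N h := by exact_mod_cast hN h
      positivity
    have h1 : ∀ h, 0 < l h ((t : ℤ), z) ↔ 0 < ev h (fun i => (z i : ℝ) / (t : ℝ)) 1 := by
      intro h
      rw [← Int.cast_pos (R := ℝ), hlv, mul_pos_iff_of_pos_left (hpos h)]
    have h2 : ∀ ab : (Fin d → ℚ) × ℚ, l (ab.1, -ab.2) ((t : ℤ), z) ≠ 0 ↔
        (∑ i : Fin d, (ab.1 i : ℝ) * ((z i : ℝ) / (t : ℝ))) ≠ (ab.2 : ℝ) := by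
      intro ab
      rw [← Int.cast_ne_zero (α := ℝ), hlv, mul_ne_zero_iff, and_iff_right (hpos _).ne']
      simp only [ev]
      push_cast
      rw [mul_one, ← sub_eq_add_neg, sub_ne_zero]
    rw [hH]
    simp only [← h1, ← h2, F]
    have p1 : (∏ h ∈ H, ((1 : ℚ) - if 0 ≤ (-l h) ((t : ℤ), z) then 1 else 0)) =
        if ∀ h ∈ H, 0 < l h ((t : ℤ), z) then 1 else 0 := by
      rw [← Finset.prod_boole]
      refine Finset.prod_congr rfl fun h _ => ?_
      rw [AddMonoidHom.neg_apply]
      by_cases hh : 0 < l h ((t : ℤ), z)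
      · rw [if_pos hh, if_neg (by omega)]; simp
      · rw [if_neg hh, if_pos (by omega)]; simp
    have p2 : (∏ ab ∈ A, ((1 : ℚ) - (if 0 ≤ (l (ab.1, -ab.2)) ((t : ℤ), z) then 1 else 0) *
        (if 0 ≤ (-l (ab.1, -ab.2)) ((t : ℤ), z) then 1 else 0))) =
        if ∀ ab ∈ A, l (ab.1, -ab.2) ((t : ℤ), z) ≠ 0 then 1 else 0 := by
      rw [← Finset.prod_boole]
      refine Finset.prod_congr rfl fun ab _ => ?_
      rw [AddMonoidHom.neg_apply]
      rcases lt_trichotomy (l (ab.1, -ab.2) ((t : ℤ), z)) 0 with hh | hh | hh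
      · rw [if_pos hh.ne, if_neg (by omega)]; simp
      · rw [hh]; simp
      · rw [if_pos hh.ne', if_neg (c := 0 ≤ -_) (by omega)]; simp
    rw [p1, p2, ite_and, ite_mul, one_mul, zero_mul]
  obtain ⟨R, hR⟩ := hb.exists_norm_le
  obtain ⟨B, hB⟩ := exists_nat_gt R
  obtain ⟨G, hG, hG'⟩ := CF.sum_box d F hF (AddMonoidHom.mulLeft (B : ℤ))
  obtain ⟨p, hp, Q, hQ⟩ := hG.quasi
  refine ⟨p, hp, Q, fun t ht => ?_⟩
  have ht' : (0 : ℝ) < t := by exact_mod_cast ht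
  rw [← hQ t ht, hG' t (by simp only [AddMonoidHom.coe_mulLeft]; positivity),
    Finset.sum_congr rfl (fun z _ => hFval t ht z), Finset.sum_boole, hE t ht]
  congr 1
  rw [← Set.ncard_coe_finset]
  congr 1
  ext z
  simp only [Set.mem_ofPred_eq, Finset.coe_filter, Fintype.mem_piFinset, Finset.mem_Ico,
    AddMonoidHom.coe_mulLeft]
  refine ⟨fun h => ⟨fun i => ?_, h⟩, fun h => h.2⟩
  have h1 := (norm_le_pi_norm _ i).trans (hR _ (interior_subset h.1))
  rw [Real.norm_eq_abs] at h1
  have h2 := abs_lt.1 (lt_of_le_of_lt h1 hB)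
  have h3 := (lt_div_iff₀ ht').1 h2.1
  have h4 := (div_lt_iff₀ ht').1 h2.2
  constructor
  · have : -((B : ℤ) * (t : ℤ)) < z i := by
      have : -((B : ℝ) * (t : ℝ)) < z i := by linarith
      exact_mod_cast this
    exact this.le
  · exact_mod_cast h4

end Ehr


/-- the open Ehrhart counting function of a rational inside-out polytope
`(P, A)` in `ℝ^d` is a quasipolynomial of degree `d` whose leading coefficient is the
volume of `P` in every constituent. -/
theorem stmt_3 (d : ℕ)
    (V : Finset (Fin d → ℝ)) (hV : ∀ v ∈ V, ∀ i : Fin d, ∃ a : ℚ, v i = (a : ℝ))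
    (P : Set (Fin d → ℝ)) (hP : P = convexHull ℝ (V : Set (Fin d → ℝ)))
    (hPint : (interior P).Nonempty)
    (A : Finset ((Fin d → ℚ) × ℚ)) (hA : ∀ ab ∈ A, ab.1 ≠ 0)
    (E : ℕ → ℕ)
    (hE : ∀ t : ℕ, 0 < t → E t = Set.ncard {z : Fin d → ℤ |
      (fun i => (z i : ℝ) / (t : ℝ)) ∈ interior P ∧
      ∀ ab ∈ A, (∑ i : Fin d, (ab.1 i : ℝ) * ((z i : ℝ) / (t : ℝ))) ≠ (ab.2 : ℝ)}) :
    ∃ p : ℕ, 0 < p ∧ ∃ f : ℕ → Polynomial ℚ,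
      (∀ k < p, (f k).degree = (d : WithBot ℕ) ∧
        ((f k).coeff d : ℝ) = (volume P).toReal) ∧
      (∀ t : ℕ, 0 < t → (E t : ℚ) = (f (t % p)).eval (t : ℚ)) := by
  have hbd : Bornology.IsBounded P := by
    rw [hP]; exact isBounded_convexHull.2 V.finite_toSet.isBounded
  have hconv : Convex ℝ P := by rw [hP]; exact convex_convexHull ℝ _
  have hlim := Ehr.count_tendsto d P hconv hbd A hA E hE
  obtain ⟨p, hp, F, hF⟩ := Ehr.count_quasi d V hV P hP hPint hbd A E hE
  have hv : (volume P).toReal ≠ 0 := by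
    refine (ENNReal.toReal_pos ?_ hbd.measure_lt_top.ne).ne'
    exact (lt_of_lt_of_le (isOpen_interior.measure_pos volume hPint)
      (measure_mono interior_subset)).ne'
  refine ⟨p, hp, F, fun k hk => ?_, hF⟩
  have hu0 : Filter.Tendsto (fun n : ℕ => k + p * (n + 1)) Filter.atTop Filter.atTop := by
    refine Filter.tendsto_atTop_mono (fun n => ?_) Filter.tendsto_id
    simp only [id]
    nlinarith
  have hu : Filter.Tendsto (fun n : ℕ => ((k + p * (n + 1) : ℕ) : ℝ)) Filter.atTop Filter.atTop :=
    tendsto_natCast_atTop_atTop.comp hu0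
  have h1 := Ehr.poly_of_tendsto ((F k).map (algebraMap ℚ ℝ)) d _ hv _ hu (by
    refine (hlim.comp hu0).congr fun n => ?_
    simp only [Function.comp_apply]
    congr 1
    have h2 := hF (k + p * (n + 1)) (by positivity)
    rw [Nat.add_mul_mod_self_left, Nat.mod_eq_of_lt hk] at h2
    have h3 := congrArg (algebraMap ℚ ℝ) h2
    rw [← Polynomial.eval_map_apply] at h3
    simpa using h3)
  rw [Polynomial.degree_map, Polynomial.coeff_map] at h1
  exact h1
end

section
/- Let z = (z_1, …, z_q) ∈ (ℝ²)^q lie on no hyperplane of the move arrangement A_P^q, and let σ be a permutation of {1, …, q} with σ ≠ id. Then the permuted point σ·z = (z_{σ(1)}, …, z_{σ(q)}) has a different sign vector from z: there exist indices i < j and a basic move m ∈ M such that (z_j − z_i)·m^⊥ and (z_{σ(j)} − z_{σ(i)})·m^⊥ have opposite signs. Consequently the symmetric group S_q acts freely on the set of connected components of (B°)^q \ ⋃A_P^q, so there are exactly q! labelled nonattacking configuration types for each unlabelled type. -/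
open MeasureTheory

theorem aux_lt {q : ℕ} (f : Fin q → ℝ) (σ : Equiv.Perm (Fin q))
    (h : ∀ i j, f i < f j → f (σ i) < f (σ j)) (i : Fin q) : ¬ f i < f (σ i) := by
  intro hi
  have step : ∀ n : ℕ, f ((σ ^ n) i) < f ((σ ^ (n + 1)) i) := by
    intro n
    induction n with
    | zero => simpa using hi
    | succ n ih =>
      have := h _ _ ih
      rwa [← Equiv.Perm.mul_apply, ← Equiv.Perm.mul_apply, ← pow_succ', ← pow_succ'] at this
  have hm : StrictMono (fun n : ℕ => f ((σ ^ n) i)) := strictMono_nat_of_lt_succ step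
  have := hm (orderOf_pos σ)
  simp [pow_orderOf_eq_one] at this

theorem aux_perm {q : ℕ} (f : Fin q → ℝ) (hf : ∀ i j, i ≠ j → f j - f i ≠ 0)
    (σ : Equiv.Perm (Fin q)) (hσ : σ ≠ 1) :
    ∃ i j : Fin q, i < j ∧ (f j - f i) * (f (σ j) - f (σ i)) < 0 := by
  by_contra! hc
  have key : ∀ i j, f i < f j → f (σ i) < f (σ j) := by
    intro i j hij
    have hne : i ≠ j := by rintro rfl; exact lt_irrefl _ hij
    have h1 := hf (σ i) (σ j) (fun h => hne (σ.injective h))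
    have h2 : 0 ≤ (f j - f i) * (f (σ j) - f (σ i)) := by
      rcases lt_or_gt_of_ne hne with h | h
      · exact hc i j h
      · have := hc j i h
        linarith
    have h3 : 0 ≤ f (σ j) - f (σ i) := nonneg_of_mul_nonneg_right h2 (by linarith)
    have h4 := lt_of_le_of_ne h3 (Ne.symm h1)
    linarith
  apply hσ
  ext1 i
  by_contra hi
  have h1 := aux_lt f σ key i
  have h2 := aux_lt (fun i => - f i) σ (fun i j hij => by
    have := key j i (by simpa using hij)
    simpa using this) i
  have h3 := hf i (σ i) (fun h => hi h.symm)
  simp only [neg_lt_neg_iff] at h2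
  exact h3 (by linarith)

/-- a nontrivial permutation of a point lying on no move hyperplane changes
its sign vector; consequently the symmetric group acts freely on the connected components
of `(B°)^q \ ⋃A_P^q`. -/
theorem stmt_6
    (M : Finset (ℤ × ℤ)) (hMne : M.Nonempty)
    (hMmove : ∀ m ∈ M, m ≠ 0 ∧ Int.gcd m.1 m.2 = 1)
    (hMpar : ∀ m ∈ M, ∀ m' ∈ M, m ≠ m' → m.1 * m'.2 - m.2 * m'.1 ≠ 0)
    (V : Finset (ℝ × ℝ)) (hV : ∀ v ∈ V, ∃ a b : ℚ, v = ((a : ℝ), (b : ℝ)))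
    (B : Set (ℝ × ℝ)) (hB : B = convexHull ℝ (V : Set (ℝ × ℝ)))
    (hBint : (interior B).Nonempty)
    (q : ℕ) (hq : 0 < q)
    (Ω : Set (Fin q → ℝ × ℝ))
    (hΩ : Ω = {z : Fin q → ℝ × ℝ | (∀ i : Fin q, z i ∈ interior B) ∧
      ∀ i j : Fin q, i ≠ j → ∀ m ∈ M,
        ((z j).1 - (z i).1) * (m.2 : ℝ) - ((z j).2 - (z i).2) * (m.1 : ℝ) ≠ 0}) :
    -- the sign vector changes under any nontrivial permutation:
    (∀ z : Fin q → ℝ × ℝ,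
      (∀ i j : Fin q, i ≠ j → ∀ m ∈ M,
        ((z j).1 - (z i).1) * (m.2 : ℝ) - ((z j).2 - (z i).2) * (m.1 : ℝ) ≠ 0) →
      ∀ σ : Equiv.Perm (Fin q), σ ≠ 1 →
        ∃ i j : Fin q, i < j ∧ ∃ m ∈ M,
          (((z j).1 - (z i).1) * (m.2 : ℝ) - ((z j).2 - (z i).2) * (m.1 : ℝ)) *
            (((z (σ j)).1 - (z (σ i)).1) * (m.2 : ℝ)
              - ((z (σ j)).2 - (z (σ i)).2) * (m.1 : ℝ)) < 0) ∧
    -- consequently the S_q-action on the components is free: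
    (∀ z ∈ Ω, ∀ σ : Equiv.Perm (Fin q), σ ≠ 1 →
      connectedComponentIn Ω (fun i => z (σ i)) ≠ connectedComponentIn Ω z) := by
  have part1 : ∀ z : Fin q → ℝ × ℝ,
      (∀ i j : Fin q, i ≠ j → ∀ m ∈ M,
        ((z j).1 - (z i).1) * (m.2 : ℝ) - ((z j).2 - (z i).2) * (m.1 : ℝ) ≠ 0) →
      ∀ σ : Equiv.Perm (Fin q), σ ≠ 1 →
        ∃ i j : Fin q, i < j ∧ ∃ m ∈ M,
          (((z j).1 - (z i).1) * (m.2 : ℝ) - ((z j).2 - (z i).2) * (m.1 : ℝ)) *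
            (((z (σ j)).1 - (z (σ i)).1) * (m.2 : ℝ)
              - ((z (σ j)).2 - (z (σ i)).2) * (m.1 : ℝ)) < 0 := by
    intro z hz σ hσ
    obtain ⟨m, hm⟩ := hMne
    obtain ⟨i, j, hij, h⟩ := aux_perm (fun i => (z i).1 * (m.2 : ℝ) - (z i).2 * (m.1 : ℝ))
      (fun i j hij h => hz i j hij m hm (by linarith)) σ hσ
    refine ⟨i, j, hij, m, hm, ?_⟩
    convert h using 1
    ring
  refine ⟨part1, ?_⟩
  intro z hz σ hσ heq
  have hz' := hz
  rw [hΩ] at hz'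
  obtain ⟨i, j, hij, m, hm, hlt⟩ := part1 z hz'.2 σ hσ
  have hσz : (fun i => z (σ i)) ∈ Ω := by
    rw [hΩ]
    exact ⟨fun i => hz'.1 (σ i), fun i j hij => hz'.2 (σ i) (σ j) (fun h => hij (σ.injective h))⟩
  have hmem : (fun i => z (σ i)) ∈ connectedComponentIn Ω z := by
    rw [← heq]; exact mem_connectedComponentIn hσz
  have hmem0 := mem_connectedComponentIn hz
  have hpre : IsPreconnected (connectedComponentIn Ω z) := isPreconnected_connectedComponentIn
  let g : (Fin q → ℝ × ℝ) → ℝ := fun w =>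
    ((w j).1 - (w i).1) * (m.2 : ℝ) - ((w j).2 - (w i).2) * (m.1 : ℝ)
  have hg : Continuous g := by fun_prop
  have hne : ∀ w ∈ connectedComponentIn Ω z, g w ≠ 0 := by
    intro w hw
    have := connectedComponentIn_subset Ω z hw
    rw [hΩ] at this
    exact this.2 i j hij.ne m hm
  have hlt' : g z * g (fun i => z (σ i)) < 0 := hlt
  rcases mul_neg_iff.1 hlt' with ⟨h1, h2⟩ | ⟨h1, h2⟩
  · obtain ⟨w, hw, hw0⟩ := hpre.intermediate_value hmem hmem0 hg.continuousOn ⟨h2.le, h1.le⟩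
    exact hne w hw hw0
  · obtain ⟨w, hw, hw0⟩ := hpre.intermediate_value hmem0 hmem hg.continuousOn ⟨h1.le, h2.le⟩
    exact hne w hw hw0
end
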